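/- arXiv:1010.3875 — 3 statements merged into one kernel-verified Lean document; each statement's English description precedes it below -/
import Mathlib

section
/- Let $d \ge 1$ be an integer and let $\alpha \in (d, d+2)$ and $\nu > 0$. For $t > 1$ set $r(t) = t^{(\alpha-d+2)/(4\alpha)}$, and for a compactly supported Borel probability measure $\mu$ on $\mathbb{R}^d$ set $m_\mu = \int x\,\mu(\mathrm{d}x)$ and $J_t(\mu) = \nu\, t^{-\frac{\alpha+d-2}{2\alpha}} r(t)^d \int_{\mathbb{R}^d} \bigl( e^{-t\,\hat v(r(t)(m_\mu-y))} - e^{-t \int \hat v(r(t)(x-y))\,\mu(\mathrm{d}x)} \bigr)\,\mathrm{d}y$. Then for every compact set $K \subset \mathbb{R}^d$, $\sup_{\mu \in \mathcal{P}(K)} \bigl| J_t(\mu) - \frac{\nu\alpha\sigma_d}{2d}\,\Gamma\bigl(\tfrac{2\alpha-d+2}{\alpha}\bigr) \int |x-m_\mu|^2\,\mu(\mathrm{d}x) \bigr| \to 0$ as $t \to \infty$. -/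
/-!
Put `s = t ^ (1 / α)`, `δ = t ^ (-(d + 2 - α) / (4 α))`, so that `r(t) = s δ`. After the substitution
`y = m - w / δ` (`rescale`) and centring of `μ`, the functional becomes
`ν δ⁻² ∫ (exp (-G w) - exp (-∫ G (w + δ x) μ(dx))) dw` with `G w = min (‖w‖ ^ (-α)) t`.

Let `R` bound the support of the centred measure. On `‖w‖ ≥ 2 R δ` the truncation at `t` is
inactive, and `‖w‖ ^ (-α)` is expanded to second order: the first-order term vanishes because `μ` is
centred, so the integrand is `(1 / 2) exp (-‖w‖ ^ (-α)) ∫ hess α w x μ(dx)` up to `δ` times an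
integrable function independent of `μ` (`outer_bound`). On `‖w‖ ≤ 2 R δ` both exponentials are at
most `exp (-(3 R δ) ^ (-α))`, which is negligible (`inner_bound`). Integrating these pointwise bounds
gives an error `O(δ)` that is uniform in `μ` (`core`).

The main term is computed in `integral_main`: by rotation invariance (`isotropy`) the integral over
`w` of the quadratic form `hess α w x` equals `‖x‖ ^ 2` times a radial integral, which polar
coordinates and the substitution `u = ρ ^ (-α)` turn into a Gamma value (`integral_radial`).
-/

open MeasureTheory Real Filter
open scoped Classical

/-- The shape function `v̂(y) = min(|y|^{-α}, 1)`, with `v̂(0) = 1`. -/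

noncomputable def hatv (d : ℕ) (α : ℝ) (y : EuclideanSpace ℝ (Fin d)) : ℝ :=
  if y = 0 then 1 else min (‖y‖ ^ (-α)) 1

/-- Surface area of the unit sphere in `ℝ^d`: `σ_d = d · ω_d`. -/
noncomputable def sigmad (d : ℕ) : ℝ :=
  d * (volume (Metric.ball (0 : EuclideanSpace ℝ (Fin d)) 1)).toReal

/-! ### Taylor estimates -/

lemma abs_le_of_deriv_bound {R R' : ℝ → ℝ} {C : ℝ} {k : ℕ} (h0 : R 0 = 0)
    (hR : ∀ u, -(3 / 4) ≤ u → HasDerivAt R (R' u) u)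
    (hb : ∀ u, -(3 / 4) ≤ u → |R' u| ≤ C * |u| ^ k) (hC : 0 ≤ C) (s : ℝ) (hs : -(3 / 4) ≤ s) :
    |R s| ≤ C * |s| ^ (k + 1) := by
  have hmem : ∀ u ∈ Set.uIcc 0 s, -(3 / 4) ≤ u ∧ |u| ≤ |s| := by
    intro u hu
    rcases Set.mem_uIcc.1 hu with h | h
    · exact ⟨by linarith [h.1], by rw [abs_of_nonneg h.1, abs_of_nonneg (h.1.trans h.2)]; exact h.2⟩
    · exact ⟨by linarith [h.1], by
        rw [abs_of_nonpos h.2, abs_of_nonpos (h.1.trans h.2)]; linarith [h.1]⟩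
  have := Convex.norm_image_sub_le_of_norm_hasDerivWithin_le (f := R) (f' := R')
    (C := C * |s| ^ k) (s := Set.uIcc 0 s) (x := 0) (y := s)
    (fun u hu => (hR u (hmem u hu).1).hasDerivWithinAt)
    (fun u hu => (hb u (hmem u hu).1).trans (by
      have := (hmem u hu).2
      gcongr)) (convex_uIcc 0 s) Set.left_mem_uIcc Set.right_mem_uIcc
  simpa [h0, pow_succ, mul_assoc] using this

lemma taylor_scalar (p : ℝ) (hp : 0 < p) : ∃ C : ℝ, 0 ≤ C ∧ ∀ s : ℝ, -(3 / 4) ≤ s →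
    |(1 + s) ^ (-p) - 1 + p * s - p * (p + 1) / 2 * s ^ 2| ≤ C * |s| ^ 3 := by
  have hder : ∀ q u : ℝ, -(3 / 4) ≤ u →
      HasDerivAt (fun s : ℝ => (1 + s) ^ (-q)) (-q * (1 + u) ^ (-(q + 1))) u := by
    intro q u hu
    have h : HasDerivAt (fun s : ℝ => (1 + s) ^ (-q)) (1 * -q * (1 + u) ^ (-q - 1)) u :=
      ((hasDerivAt_id' u).const_add 1).rpow_const (p := -q) (Or.inl (by linarith))
    rw [show -(q + 1) = -q - 1 by ring]
    simpa using h
  have b0 : ∀ q : ℝ, 0 < q → ∀ u : ℝ, -(3 / 4) ≤ u →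
      |(1 + u) ^ (-q) - 1| ≤ (q * (1 / 4) ^ (-(q + 1))) * |u| ^ (0 + 1) := by
    intro q hq u hu
    refine abs_le_of_deriv_bound (R := fun s => (1 + s) ^ (-q) - 1)
      (R' := fun u => -q * (1 + u) ^ (-(q + 1))) (by simp)
      (fun u hu => (hder q u hu).sub_const 1) ?_ (by positivity) u hu
    intro u hu
    have h1 : (0:ℝ) ≤ 1 + u := by linarith
    rw [abs_mul, abs_neg, abs_of_pos hq, abs_of_nonneg (Real.rpow_nonneg h1 _), pow_zero, mul_one]
    gcongr ?_ * ?_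
    exact Real.rpow_le_rpow_of_nonpos (by norm_num) (by linarith) (by linarith)
  have b1 : ∀ q : ℝ, 0 < q → ∀ u : ℝ, -(3 / 4) ≤ u →
      |(1 + u) ^ (-q) - 1 + q * u| ≤
        (q * ((q + 1) * (1 / 4) ^ (-(q + 1 + 1)))) * |u| ^ (0 + 1 + 1) := by
    intro q hq u hu
    refine abs_le_of_deriv_bound (R := fun s => (1 + s) ^ (-q) - 1 + q * s)
      (R' := fun u => -q * (1 + u) ^ (-(q + 1)) + q * 1) (by simp)
      (fun u hu => ((hder q u hu).sub_const 1).add ((hasDerivAt_id u).const_mul q)) ?_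
      (by positivity) u hu
    intro u hu
    have := b0 (q + 1) (by linarith) u hu
    rw [show -q * (1 + u) ^ (-(q + 1)) + q * 1 = -q * ((1 + u) ^ (-(q + 1)) - 1) by ring,
      abs_mul, abs_neg, abs_of_pos hq, mul_assoc]
    gcongr
  refine ⟨p * ((p + 1) * ((p + 1 + 1) * (1 / 4) ^ (-(p + 1 + 1 + 1)))), by positivity, ?_⟩
  intro s hs
  refine abs_le_of_deriv_bound (k := 2)
    (R := fun s => (1 + s) ^ (-p) - 1 + p * s - p * (p + 1) / 2 * s ^ 2)
    (R' := fun u => -p * (1 + u) ^ (-(p + 1)) + p * 1 - p * (p + 1) / 2 * (2 * u)) (by simp)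
    (fun u hu => (((hder p u hu).sub_const 1).add ((hasDerivAt_id u).const_mul p)).sub
      (by simpa using ((hasDerivAt_pow 2 u).const_mul (p * (p + 1) / 2)))) ?_ (by positivity) s hs
  intro u hu
  have := b1 (p + 1) (by linarith) u hu
  rw [show -p * (1 + u) ^ (-(p + 1)) + p * 1 - p * (p + 1) / 2 * (2 * u)
    = -p * ((1 + u) ^ (-(p + 1)) - 1 + (p + 1) * u) by ring,
    abs_mul, abs_neg, abs_of_pos hp, mul_assoc]
  gcongr

lemma exp_taylor (a b m : ℝ) (ha : m ≤ a) (hb : m ≤ b) :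
    |Real.exp (-a) - Real.exp (-b) - Real.exp (-a) * (b - a)| ≤ (b - a) ^ 2 * Real.exp (-m) := by
  have e1 : Real.exp (-b) ≥ Real.exp (-a) * (1 - (b - a)) := by
    have : Real.exp (-b) = Real.exp (-a) * Real.exp (-(b - a)) := by
      rw [← Real.exp_add]; congr 1; ring
    rw [this]
    gcongr
    linarith [Real.add_one_le_exp (-(b - a))]
  rw [abs_of_nonpos (by linarith)]
  have e2 : Real.exp (-a) ≥ Real.exp (-b) * (1 + (b - a)) := by
    have : Real.exp (-a) = Real.exp (-b) * Real.exp (b - a) := by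
      rw [← Real.exp_add]; congr 1; ring
    rw [this]
    gcongr
    linarith [Real.add_one_le_exp (b - a)]
  have ea : Real.exp (-a) ≤ Real.exp (-m) := Real.exp_le_exp.2 (by linarith)
  have eb : Real.exp (-b) ≤ Real.exp (-m) := Real.exp_le_exp.2 (by linarith)
  have pa := Real.exp_pos (-a)
  have pb := Real.exp_pos (-b)
  -- with `h = b - a`, both cases rest on `e2`: for `0 ≤ h` via `(1 + h) (1 - h + h²) = 1 + h³ ≥ 1`,
  -- for `h ≤ 0` after multiplication by `-h`
  set h := b - a
  rcases le_total 0 h with hh | hh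
  · have h1 : Real.exp (-b) - Real.exp (-a) + Real.exp (-a) * h ≤ h ^ 2 * Real.exp (-a) := by
      have : Real.exp (-b) * (1 + h) ≤ Real.exp (-a) * (1 + h ^ 3) := by
        nlinarith [mul_nonneg pa.le (pow_nonneg hh 3)]
      have h3 : (1 + h) * (Real.exp (-b)) ≤ (1 + h) * (Real.exp (-a) * (1 - h + h ^ 2)) := by
        nlinarith
      have := le_of_mul_le_mul_left h3 (by linarith)
      linarith
    nlinarith [mul_le_mul_of_nonneg_left ea (sq_nonneg h)]
  · have h1 : Real.exp (-b) - Real.exp (-a) + Real.exp (-a) * h ≤ h ^ 2 * Real.exp (-b) := by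
      nlinarith [mul_nonneg (neg_nonneg.2 hh) (sub_nonneg.2 e2)]
    nlinarith [mul_le_mul_of_nonneg_left eb (sq_nonneg h)]

/-- The second differential of `w ↦ ‖w‖ ^ (-α)` at `w`, evaluated at `(x, x)`. At `w = 0` it is `0`
for `0 < α`, by the convention for `0 ^ y` with `y ≠ 0`. -/
noncomputable def hess {d : ℕ} (α : ℝ) (w x : EuclideanSpace ℝ (Fin d)) : ℝ :=
  α * (α + 2) * ‖w‖ ^ (-α - 4) * (inner ℝ w x) ^ 2 - α * ‖w‖ ^ (-α - 2) * ‖x‖ ^ 2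

lemma abs_hess_le {d : ℕ} {α : ℝ} (hα : 0 < α) (w x : EuclideanSpace ℝ (Fin d)) :
    |hess α w x| ≤ α * (α + 3) * ‖w‖ ^ (-α - 2) * ‖x‖ ^ 2 := by
  unfold hess
  rcases eq_or_ne w 0 with rfl | hw
  · simp only [norm_zero]
    rw [Real.zero_rpow (by linarith), Real.zero_rpow (by linarith)]
    simp
  have hw0 : 0 < ‖w‖ := norm_pos_iff.2 hw
  have h1 : ‖w‖ ^ (-α - 2) = ‖w‖ ^ (-α - 4) * ‖w‖ ^ 2 := by
    rw [← Real.rpow_natCast, ← Real.rpow_add hw0]; congr 1; push_cast; ring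
  have h2 : (inner ℝ w x) ^ 2 ≤ ‖w‖ ^ 2 * ‖x‖ ^ 2 := by
    rw [← mul_pow, ← sq_abs]
    gcongr
    exact abs_real_inner_le_norm w x
  rw [h1]
  have hP : 0 ≤ ‖w‖ ^ (-α - 4) := by positivity
  generalize ‖w‖ ^ (-α - 4) = P at *
  have h3 : 0 ≤ (inner ℝ w x : ℝ) ^ 2 := sq_nonneg _
  generalize (inner ℝ w x : ℝ) ^ 2 = I at *
  have h4 : α * (α + 2) * P * I ≤ α * (α + 2) * P * (‖w‖ ^ 2 * ‖x‖ ^ 2) := by gcongr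
  have h5 : 0 ≤ α * (α + 2) * P * I := by positivity
  have h6 : 0 ≤ α * (α + 2) * (P * (‖w‖ ^ 2 * ‖x‖ ^ 2)) := by positivity
  have h7 : 0 ≤ α * (P * (‖w‖ ^ 2 * ‖x‖ ^ 2)) := by positivity
  rw [abs_le]
  constructor <;> nlinarith

set_option maxHeartbeats 1000000 in
/-- Uniform third-order Taylor estimate for `w ↦ ‖w‖ ^ (-α)`. It is the scalar estimate
`taylor_scalar` for `(1 + s) ^ (-α / 2)` with `1 + s = ‖w + v‖ ^ 2 / ‖w‖ ^ 2`. -/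
lemma taylor_norm (d : ℕ) {α : ℝ} (hα : 0 < α) : ∃ C : ℝ, 0 ≤ C ∧
    ∀ w v : EuclideanSpace ℝ (Fin d), w ≠ 0 → ‖v‖ ≤ ‖w‖ / 2 →
      |‖w + v‖ ^ (-α) - (‖w‖ ^ (-α) - α * ‖w‖ ^ (-α - 2) * inner ℝ w v + hess α w v / 2)| ≤
        C * ‖v‖ ^ 3 * ‖w‖ ^ (-α - 3) := by
  obtain ⟨C, hC, hT⟩ := taylor_scalar (α / 2) (by linarith)
  refine ⟨27 * C + α * (α + 2), by positivity, ?_⟩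
  intro w v hw hv
  have hw0 : 0 < ‖w‖ := norm_pos_iff.2 hw
  set a : ℝ := inner ℝ w v / ‖w‖ ^ 2 with ha
  set β : ℝ := ‖v‖ / ‖w‖ with hβ
  have hβ0 : 0 ≤ β := by positivity
  have hβ2 : β ≤ 1 / 2 := by rw [hβ, div_le_iff₀ hw0]; linarith
  have haβ : |a| ≤ β := by
    rw [ha, hβ, abs_div, abs_of_pos (pow_pos hw0 2), div_le_div_iff₀ (by positivity) hw0]
    nlinarith [abs_real_inner_le_norm w v]
  have hI : inner ℝ w v = a * ‖w‖ ^ 2 := by rw [ha]; field_simp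
  have hV : ‖v‖ = β * ‖w‖ := by rw [hβ]; field_simp
  set s : ℝ := 2 * a + β ^ 2 with hs
  have hs1 : -(3 / 4) ≤ s := by nlinarith [neg_le_of_abs_le haβ, sq_nonneg (β - 1 / 2)]
  have hs3 : |s| ≤ 3 * β := by
    rw [abs_le]
    constructor <;> nlinarith [neg_le_of_abs_le haβ, le_of_abs_le haβ]
  have hsq : ‖w + v‖ ^ 2 = ‖w‖ ^ 2 * (1 + s) := by
    rw [norm_add_sq_real, hI, hV, hs]; ring
  have hpow : ‖w + v‖ ^ (-α) = ‖w‖ ^ (-α) * (1 + s) ^ (-(α / 2)) := by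
    have : ∀ x : ℝ, 0 ≤ x → x ^ (-α) = (x ^ 2) ^ (-(α / 2)) := by
      intro x hx
      rw [← Real.rpow_natCast, ← Real.rpow_mul hx]; congr 1; push_cast; ring
    rw [this _ (norm_nonneg _), this _ hw0.le, hsq,
      Real.mul_rpow (by positivity) (by linarith)]
  have hp : ∀ n : ℕ, ‖w‖ ^ (-α) = ‖w‖ ^ (-α - n) * ‖w‖ ^ n := by
    intro n
    rw [← Real.rpow_natCast, ← Real.rpow_add hw0]; congr 1; ring
  have hp2 : ‖w‖ ^ (-α) = ‖w‖ ^ (-α - 2) * ‖w‖ ^ 2 := by exact_mod_cast hp 2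
  have hp3 : ‖w‖ ^ (-α) = ‖w‖ ^ (-α - 3) * ‖w‖ ^ 3 := by exact_mod_cast hp 3
  have hp4 : ‖w‖ ^ (-α) = ‖w‖ ^ (-α - 4) * ‖w‖ ^ 4 := by exact_mod_cast hp 4
  have hmain : ‖w + v‖ ^ (-α) -
      (‖w‖ ^ (-α) - α * ‖w‖ ^ (-α - 2) * inner ℝ w v + hess α w v / 2) =
      ‖w‖ ^ (-α) * (((1 + s) ^ (-(α / 2)) - 1 + α / 2 * s - α / 2 * (α / 2 + 1) / 2 * s ^ 2)
        + α * (α + 2) / 8 * (4 * a * β ^ 2 + β ^ 4)) := by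
    have e1 : α * ‖w‖ ^ (-α - 2) * inner ℝ w v = α * ‖w‖ ^ (-α) * a := by
      rw [hp2, hI]; ring
    have e2 : hess α w v = ‖w‖ ^ (-α) * (α * (α + 2) * a ^ 2 - α * β ^ 2) := by
      have : hess α w v = α * (α + 2) * (‖w‖ ^ (-α - 4) * ‖w‖ ^ 4) * a ^ 2
          - α * (‖w‖ ^ (-α - 2) * ‖w‖ ^ 2) * β ^ 2 := by
        unfold hess; rw [hI, hV]; ring
      rw [this, ← hp2, ← hp4]; ring
    rw [e1, e2, hpow, hs]; ring
  have hfin : (27 * C + α * (α + 2)) * ‖v‖ ^ 3 * ‖w‖ ^ (-α - 3) =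
      ‖w‖ ^ (-α) * ((27 * C + α * (α + 2)) * β ^ 3) := by
    rw [hp3, hV]; ring
  rw [hmain, hfin, abs_mul, abs_of_nonneg (Real.rpow_nonneg hw0.le _)]
  refine mul_le_mul_of_nonneg_left ?_ (Real.rpow_nonneg hw0.le _)
  refine (abs_add_le _ _).trans ?_
  have h1 := hT s hs1
  have h2 : C * |s| ^ 3 ≤ C * (3 * β) ^ 3 := by gcongr
  have h3 : |4 * a * β ^ 2 + β ^ 4| ≤ 8 * β ^ 3 := by
    have hb3 : 0 ≤ β ^ 3 := by positivity
    have hb2 : 0 ≤ β ^ 2 := by positivity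
    rw [abs_le]
    constructor <;> nlinarith [mul_le_mul_of_nonneg_right (neg_le_of_abs_le haβ) hb2,
      mul_le_mul_of_nonneg_right (le_of_abs_le haβ) hb2, mul_le_mul_of_nonneg_right hβ2 hb3]
  have h4 : |α * (α + 2) / 8 * (4 * a * β ^ 2 + β ^ 4)| ≤ α * (α + 2) / 8 * (8 * β ^ 3) := by
    rw [abs_mul, abs_of_nonneg (by positivity : (0:ℝ) ≤ α * (α + 2) / 8)]
    gcongr
  nlinarith

/-! ### Radial integrals and the main term -/

/-- Radial integrability near the origin comes from the exponential and at infinity from `q > d`;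
polar coordinates and the substitution `u = ρ ^ (-α)` turn the integral into a Gamma integral. -/
lemma integrable_radial (d : ℕ) (hd : 1 ≤ d) {α c q : ℝ} (hα : 0 < α) (hc : 0 < c)
    (hq : (d : ℝ) < q) :
    Integrable (fun w : EuclideanSpace ℝ (Fin d) =>
      Real.exp (-(c * ‖w‖ ^ (-α))) * ‖w‖ ^ (-q)) := by
  have : Nonempty (Fin d) := ⟨⟨0, hd⟩⟩
  rw [integrable_fun_norm_addHaar volume
    (f := fun ρ : ℝ => Real.exp (-(c * ρ ^ (-α))) * ρ ^ (-q))]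
  have h1 : IntegrableOn (fun x : ℝ => x ^ ((q - d) / α - 1) * Real.exp (-c * x ^ (1:ℝ)))
      (Set.Ioi 0) :=
    integrableOn_rpow_mul_exp_neg_mul_rpow (by
      have : 0 < (q - d) / α := div_pos (by linarith) hα
      linarith) one_pos hc
  rw [← integrableOn_Ioi_comp_rpow_iff _ (p := -α) (by linarith)] at h1
  have h2 := h1.const_mul α⁻¹
  refine IntegrableOn.congr_fun h2 (fun x hx => ?_) measurableSet_Ioi
  have hx : (0:ℝ) < x := hx
  simp only [smul_eq_mul, abs_neg, abs_of_pos hα, finrank_euclideanSpace, Fintype.card_fin,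
    Real.rpow_one]
  rw [← Real.rpow_natCast, Nat.cast_sub hd, ← Real.rpow_mul hx.le]
  have : x ^ ((d:ℝ) - (1:ℕ)) * x ^ (-q) = x ^ (-α - 1) * x ^ (-α * ((q - d) / α - 1)) := by
    rw [← Real.rpow_add hx, ← Real.rpow_add hx]
    congr 1
    push_cast
    field_simp
    ring
  rw [mul_left_comm (x ^ ((d:ℝ) - (1:ℕ))), this, neg_mul]
  field_simp

lemma integral_radial (d : ℕ) (hd : 1 ≤ d) {α : ℝ} (hα : 0 < α) (hα₁ : (d : ℝ) < α) :
    ∫ w : EuclideanSpace ℝ (Fin d), Real.exp (-‖w‖ ^ (-α)) * ‖w‖ ^ (-α - 2) =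
      sigmad d / α * Real.Gamma ((α - d + 2) / α) := by
  have : Nonempty (Fin d) := ⟨⟨0, hd⟩⟩
  rw [integral_fun_norm_addHaar volume
    (fun ρ : ℝ => Real.exp (-ρ ^ (-α)) * ρ ^ (-α - 2))]
  have hs : 0 < (α - d + 2) / α := div_pos (by linarith) hα
  rw [Real.Gamma_eq_integral hs, ← integral_comp_rpow_Ioi
    (fun u => Real.exp (-u) * u ^ ((α - d + 2) / α - 1)) (p := -α) (by linarith)]
  have : ∀ x ∈ Set.Ioi (0:ℝ), (|-α| * x ^ (-α - 1)) •
      (Real.exp (-x ^ (-α)) * (x ^ (-α)) ^ ((α - d + 2) / α - 1)) =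
      α * (x ^ (d - 1) • (Real.exp (-x ^ (-α)) * x ^ (-α - 2))) := by
    intro x hx
    have hx : (0:ℝ) < x := hx
    simp only [smul_eq_mul, abs_neg, abs_of_pos hα]
    rw [← Real.rpow_natCast, Nat.cast_sub hd, ← Real.rpow_mul hx.le]
    have : x ^ ((d:ℝ) - (1:ℕ)) * x ^ (-α - 2) =
        x ^ (-α - 1) * x ^ (-α * ((α - d + 2) / α - 1)) := by
      rw [← Real.rpow_add hx, ← Real.rpow_add hx]
      congr 1
      push_cast
      field_simp
      ring
    linear_combination (-α * Real.exp (-x ^ (-α))) * this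
  rw [setIntegral_congr_fun measurableSet_Ioi this, integral_const_mul]
  simp only [smul_eq_mul, finrank_euclideanSpace, Fintype.card_fin, nsmul_eq_mul, sigmad,
    Measure.real]
  field_simp

/-- The left-hand integral depends on `x` only through `‖x‖` (a reflection maps `x` to `‖x‖ • eᵢ`),
so it can be averaged over the directions of an orthonormal basis. -/
lemma isotropy (d : ℕ) {φ : ℝ → ℝ} (hφ : Measurable φ)
    (hint : Integrable (fun w : EuclideanSpace ℝ (Fin d) => φ ‖w‖ * ‖w‖ ^ 2))
    (x : EuclideanSpace ℝ (Fin d)) :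
    Integrable (fun w : EuclideanSpace ℝ (Fin d) => φ ‖w‖ * (inner ℝ w x) ^ 2) ∧
    d * ∫ w : EuclideanSpace ℝ (Fin d), φ ‖w‖ * (inner ℝ w x) ^ 2 =
      ‖x‖ ^ 2 * ∫ w : EuclideanSpace ℝ (Fin d), φ ‖w‖ * ‖w‖ ^ 2 := by
  have hI : ∀ x : EuclideanSpace ℝ (Fin d),
      Integrable (fun w : EuclideanSpace ℝ (Fin d) => φ ‖w‖ * (inner ℝ w x) ^ 2) := by
    intro x
    refine (hint.norm.const_mul (‖x‖ ^ 2)).mono' ?_ (ae_of_all _ fun w => ?_)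
    · refine Measurable.aestronglyMeasurable ?_
      have : Measurable fun w : EuclideanSpace ℝ (Fin d) => inner ℝ w x :=
        (by fun_prop : Continuous fun w : EuclideanSpace ℝ (Fin d) => inner ℝ w x).measurable
      exact (hφ.comp measurable_norm).mul (this.pow_const 2)
    · rw [norm_mul, norm_mul, mul_left_comm]
      gcongr
      rw [Real.norm_eq_abs, Real.norm_eq_abs, abs_pow, abs_pow, abs_norm, ← mul_pow, mul_comm ‖x‖]
      gcongr
      exact abs_real_inner_le_norm w x
  refine ⟨hI x, ?_⟩
  have hrot : ∀ i : Fin d, ∫ w : EuclideanSpace ℝ (Fin d), φ ‖w‖ * (inner ℝ w x) ^ 2 =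
      ‖x‖ ^ 2 * ∫ w : EuclideanSpace ℝ (Fin d), φ ‖w‖ * (w i) ^ 2 := by
    intro i
    set y : EuclideanSpace ℝ (Fin d) := ‖x‖ • EuclideanSpace.single i (1:ℝ) with hy
    have hxy : ‖y‖ = ‖x‖ := by simp [hy, norm_smul]
    set L := (ℝ ∙ (y - x))ᗮ.reflection with hL
    have hLy : L y = x := Submodule.reflection_sub hxy
    have := L.measurePreserving.integral_comp' (f := L.toMeasurableEquiv)
      (fun w : EuclideanSpace ℝ (Fin d) => φ ‖w‖ * (inner ℝ w x) ^ 2)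
    rw [← this, ← integral_const_mul]
    congr 1
    ext w
    have h1 : inner ℝ (L w) x = ‖x‖ * w i := by
      have : inner ℝ (L w) x = inner ℝ w y := by rw [← L.inner_map_map w y, hLy]
      rw [this, hy, inner_smul_right, EuclideanSpace.inner_single_right]
      simp
    change φ ‖L w‖ * (inner ℝ (L w) x) ^ 2 = _
    rw [h1, L.norm_map]; ring
  have hsum : ∫ w : EuclideanSpace ℝ (Fin d), φ ‖w‖ * ‖w‖ ^ 2 =
      ∑ i, ∫ w : EuclideanSpace ℝ (Fin d), φ ‖w‖ * (w i) ^ 2 := by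
    rw [← integral_finsetSum]
    · congr 1; ext w
      rw [EuclideanSpace.norm_sq_eq, Finset.mul_sum]
      simp
    · intro i _
      have := hI (EuclideanSpace.single i (1:ℝ))
      simpa [EuclideanSpace.inner_single_right] using this
  rw [hsum, Finset.mul_sum, ← Finset.sum_congr rfl (fun i _ => hrot i)]
  simp

lemma integral_exp_hess (d : ℕ) (hd : 1 ≤ d) {α : ℝ} (hα₁ : (d : ℝ) < α)
    (x : EuclideanSpace ℝ (Fin d)) :
    ∫ w : EuclideanSpace ℝ (Fin d), Real.exp (-‖w‖ ^ (-α)) * hess α w x =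
      α * sigmad d / d * Real.Gamma ((2 * α - d + 2) / α) * ‖x‖ ^ 2 := by
  have hd0 : (0:ℝ) < d := by exact_mod_cast hd
  have hα : 0 < α := by linarith
  have hcomb : ∀ w : EuclideanSpace ℝ (Fin d),
      (Real.exp (-‖w‖ ^ (-α)) * ‖w‖ ^ (-α - 4)) * ‖w‖ ^ 2 =
        Real.exp (-‖w‖ ^ (-α)) * ‖w‖ ^ (-α - 2) := by
    intro w
    rcases eq_or_ne w 0 with rfl | hw
    · simp only [norm_zero]
      rw [Real.zero_rpow (by linarith : -α - 2 ≠ 0), Real.zero_rpow (by linarith : -α - 4 ≠ 0)]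
      simp
    · have hw0 : 0 < ‖w‖ := norm_pos_iff.2 hw
      rw [mul_assoc, ← Real.rpow_natCast, ← Real.rpow_add hw0]
      congr 2; push_cast; ring
  have hrad := integrable_radial d hd (α := α) (c := 1) (q := α + 2) hα one_pos (by linarith)
  simp only [one_mul, show -(α + 2) = -α - 2 by ring] at hrad
  obtain ⟨h1, h2⟩ := isotropy d (φ := fun ρ => Real.exp (-ρ ^ (-α)) * ρ ^ (-α - 4))
    (by fun_prop) (by simpa only [hcomb] using hrad) x
  simp only [hcomb] at h2
  rw [integral_radial d hd hα hα₁] at h2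
  have hsplit : ∀ w : EuclideanSpace ℝ (Fin d), Real.exp (-‖w‖ ^ (-α)) * hess α w x =
      α * (α + 2) * (Real.exp (-‖w‖ ^ (-α)) * ‖w‖ ^ (-α - 4) * (inner ℝ w x) ^ 2) -
      α * ‖x‖ ^ 2 * (Real.exp (-‖w‖ ^ (-α)) * ‖w‖ ^ (-α - 2)) := by
    intro w; unfold hess; ring
  simp_rw [hsplit]
  rw [integral_sub (h1.const_mul _) (hrad.const_mul _), integral_const_mul, integral_const_mul,
    integral_radial d hd hα hα₁]
  have hs : (α - d + 2) / α ≠ 0 := (div_pos (by linarith) hα).ne'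
  rw [show (2 * α - d + 2) / α = (α - d + 2) / α + 1 by field_simp; ring, Real.Gamma_add_one hs]
  have h3 := (eq_div_iff hd0.ne').2 ((mul_comm _ _).trans h2)
  rw [h3]
  field_simp
  ring

lemma measurable_hess {d : ℕ} (α : ℝ) :
    Measurable fun p : EuclideanSpace ℝ (Fin d) × EuclideanSpace ℝ (Fin d) =>
      hess α p.1 p.2 := by
  have : Measurable fun p : EuclideanSpace ℝ (Fin d) × EuclideanSpace ℝ (Fin d) =>
      inner ℝ p.1 p.2 := (by fun_prop : Continuous fun p : EuclideanSpace ℝ (Fin d) ×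
        EuclideanSpace ℝ (Fin d) => inner ℝ p.1 p.2).measurable
  unfold hess
  fun_prop

lemma integral_main (d : ℕ) (hd : 1 ≤ d) {α : ℝ} (hα₁ : (d : ℝ) < α)
    {R : ℝ} (μ : Measure (EuclideanSpace ℝ (Fin d))) [IsProbabilityMeasure μ]
    (hμ : ∀ᵐ x ∂μ, ‖x‖ ≤ R) :
    Integrable (fun w : EuclideanSpace ℝ (Fin d) =>
      Real.exp (-‖w‖ ^ (-α)) * ∫ x, hess α w x ∂μ) ∧
    ∫ w : EuclideanSpace ℝ (Fin d), Real.exp (-‖w‖ ^ (-α)) * ∫ x, hess α w x ∂μ =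
      α * sigmad d / d * Real.Gamma ((2 * α - d + 2) / α) * ∫ x, ‖x‖ ^ 2 ∂μ := by
  have hα : 0 < α := by have : (0:ℝ) ≤ d := Nat.cast_nonneg d; linarith
  have hrad := integrable_radial d hd (α := α) (c := 1) (q := α + 2) hα one_pos (by linarith)
  simp only [one_mul, show -(α + 2) = -α - 2 by ring] at hrad
  have hprod : Integrable (Function.uncurry fun w x : EuclideanSpace ℝ (Fin d) =>
      Real.exp (-‖w‖ ^ (-α)) * hess α w x) (volume.prod μ) := by
    have hb := (hrad.const_mul (α * (α + 3) * R ^ 2)).mul_prod (integrable_const (μ := μ) (1:ℝ))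
    refine hb.mono' ?_ ?_
    · exact ((by fun_prop : Measurable fun p : EuclideanSpace ℝ (Fin d) ×
        EuclideanSpace ℝ (Fin d) => Real.exp (-‖p.1‖ ^ (-α))).mul
        (measurable_hess α)).aestronglyMeasurable
    · have hμ' : ∀ᵐ p ∂((volume : Measure (EuclideanSpace ℝ (Fin d))).prod μ), ‖p.2‖ ≤ R :=
        Measure.quasiMeasurePreserving_snd.ae hμ
      filter_upwards [hμ'] with p hp
      rw [Function.uncurry, norm_mul, Real.norm_eq_abs, Real.norm_eq_abs, Real.abs_exp, mul_one]
      have h1 := abs_hess_le hα p.1 p.2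
      have h2 : ‖p.2‖ ^ 2 ≤ R ^ 2 := by gcongr
      calc _ ≤ Real.exp (-‖p.1‖ ^ (-α)) * (α * (α + 3) * ‖p.1‖ ^ (-α - 2) * R ^ 2) := by
            gcongr
            exact h1.trans (by gcongr)
        _ = _ := by ring
  have h1 := hprod.integral_prod_left
  have h2 := integral_integral_swap hprod
  simp only [Function.uncurry, integral_const_mul] at h1 h2
  refine ⟨h1, ?_⟩
  rw [h2]
  simp_rw [integral_exp_hess d hd hα₁]
  rw [integral_const_mul]

/-! ### Pointwise error bounds -/

lemma measurable_hatv (d : ℕ) (α : ℝ) : Measurable (hatv d α) := by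
  unfold hatv
  refine Measurable.ite (measurableSet_singleton 0) measurable_const ?_
  fun_prop

lemma hatv_nonneg (d : ℕ) (α : ℝ) (y : EuclideanSpace ℝ (Fin d)) : 0 ≤ hatv d α y := by
  unfold hatv
  split_ifs
  · exact zero_le_one
  · positivity

lemma hatv_le_one (d : ℕ) (α : ℝ) (y : EuclideanSpace ℝ (Fin d)) : hatv d α y ≤ 1 := by
  unfold hatv
  split_ifs
  · exact le_rfl
  · exact min_le_right _ _

/-- Away from the truncation, rescaling turns `hatv` into the exact power. -/
lemma hatv_outer {d : ℕ} {α s : ℝ} (hα : 0 < α) (hs : 0 < s) {z : EuclideanSpace ℝ (Fin d)}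
    (hz : 1 ≤ s * ‖z‖) : s ^ α * hatv d α (s • z) = ‖z‖ ^ (-α) := by
  have hz0 : z ≠ 0 := by rintro rfl; norm_num at hz
  have hn : ‖s • z‖ = s * ‖z‖ := by rw [norm_smul, Real.norm_of_nonneg hs.le]
  rw [hatv, if_neg (smul_ne_zero hs.ne' hz0), hn,
    min_eq_left (Real.rpow_le_one_of_one_le_of_nonpos hz (by linarith)),
    Real.mul_rpow hs.le (norm_nonneg _), ← mul_assoc, ← Real.rpow_add hs]
  simp

lemma hatv_lower {d : ℕ} {α s ρ : ℝ} (hα : 0 < α) (hs : 0 < s) {z : EuclideanSpace ℝ (Fin d)}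
    (hz : ‖z‖ ≤ ρ) (hρ : 1 ≤ s * ρ) : ρ ^ (-α) ≤ s ^ α * hatv d α (s • z) := by
  have hρ0 : 0 < ρ := pos_of_mul_pos_right (by linarith) hs.le
  have h1 : ρ ^ (-α) = s ^ α * (s * ρ) ^ (-α) := by
    rw [Real.mul_rpow hs.le hρ0.le, ← mul_assoc, ← Real.rpow_add hs]
    simp
  have hn : ‖s • z‖ = s * ‖z‖ := by rw [norm_smul, Real.norm_of_nonneg hs.le]
  have h2 : (s * ρ) ^ (-α) ≤ 1 := Real.rpow_le_one_of_one_le_of_nonpos hρ (by linarith)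
  rw [h1]
  gcongr
  unfold hatv
  split_ifs with h
  · exact h2
  · refine le_min ?_ h2
    have h3 : 0 < ‖s • z‖ := norm_pos_iff.2 h
    refine Real.rpow_le_rpow_of_nonpos h3 ?_ (by linarith)
    rw [hn]; gcongr

lemma integrable_hatv {d : ℕ} (α t s : ℝ) (μ : Measure (EuclideanSpace ℝ (Fin d)))
    [IsProbabilityMeasure μ] {g : EuclideanSpace ℝ (Fin d) → EuclideanSpace ℝ (Fin d)}
    (hg : Measurable g) : Integrable (fun x => t * hatv d α (s • g x)) μ := by
  refine Integrable.const_mul ?_ _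
  refine (integrable_const (1:ℝ)).mono'
    ((measurable_hatv d α).comp (hg.const_smul s)).aestronglyMeasurable (ae_of_all _ fun x => ?_)
  rw [Real.norm_of_nonneg (hatv_nonneg _ _ _)]
  exact hatv_le_one _ _ _

lemma abs_integral_hess_le {d : ℕ} {α R : ℝ} (hα : 0 < α) (μ : Measure (EuclideanSpace ℝ (Fin d)))
    [IsProbabilityMeasure μ] (hμ : ∀ᵐ x ∂μ, ‖x‖ ≤ R) (w : EuclideanSpace ℝ (Fin d)) :
    |∫ x, hess α w x ∂μ| ≤ α * (α + 3) * ‖w‖ ^ (-α - 2) * R ^ 2 := by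
  have := norm_integral_le_of_norm_le_const (f := hess α w)
    (C := α * (α + 3) * ‖w‖ ^ (-α - 2) * R ^ 2) (μ := μ) (by
      filter_upwards [hμ] with x hx
      refine (abs_hess_le hα w x).trans ?_
      gcongr)
  simpa using this

/-- Estimate away from the origin. Since `μ` is centred, the linear term of the Taylor expansion
of `w ↦ ‖w‖ ^ (-α)` integrates to zero, and the truncation in `hatv` is not active. -/
lemma outer_bound (d : ℕ) {α R : ℝ} (hα : 0 < α) (hR : 1 ≤ R) :
    ∃ B D : ℝ, 0 ≤ B ∧ 0 ≤ D ∧ ∀ (s δ : ℝ), 0 < s → 0 < δ → δ ≤ 1 → 1 ≤ s * δ →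
      ∀ (μ : Measure (EuclideanSpace ℝ (Fin d))) [IsProbabilityMeasure μ],
      (∀ᵐ x ∂μ, ‖x‖ ≤ R) → ∫ x, x ∂μ = 0 → ∀ w : EuclideanSpace ℝ (Fin d), 2 * R * δ ≤ ‖w‖ →
      |(δ ^ 2)⁻¹ * (Real.exp (-(s ^ α * hatv d α (s • w))) -
          Real.exp (-∫ x, s ^ α * hatv d α (s • (w + δ • x)) ∂μ)) -
        1 / 2 * (Real.exp (-‖w‖ ^ (-α)) * ∫ x, hess α w x ∂μ)| ≤
      δ * (B * (Real.exp (-‖w‖ ^ (-α)) * ‖w‖ ^ (-α - 3)) +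
        D * (Real.exp (-((3 / 2) ^ (-α) * ‖w‖ ^ (-α))) * ‖w‖ ^ (-(2 * α + 4)))) := by
  obtain ⟨C, hC, hT⟩ := taylor_norm d hα
  refine ⟨C * R ^ 3, R ^ 4 * (α * (α + 3) + C) ^ 2, by positivity, by positivity, ?_⟩
  intro s δ hs hδ hδ1 hsδ μ _ hμ hcent w hw
  have hw0 : 0 < ‖w‖ := lt_of_lt_of_le (by positivity) hw
  have hwne : w ≠ 0 := norm_pos_iff.1 hw0
  set f : EuclideanSpace ℝ (Fin d) → ℝ := fun x => s ^ α * hatv d α (s • (w + δ • x)) with hf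
  have hfint : Integrable f μ := integrable_hatv α _ s μ (by fun_prop)
  have hidint : Integrable (fun x : EuclideanSpace ℝ (Fin d) => x) μ :=
    (integrable_const R).mono' measurable_id.aestronglyMeasurable hμ
  have hhint : Integrable (fun x => hess α w x) μ := by
    refine (integrable_const (α * (α + 3) * ‖w‖ ^ (-α - 2) * R ^ 2)).mono'
      ((measurable_hess α).comp (measurable_const.prodMk measurable_id)).aestronglyMeasurable ?_
    filter_upwards [hμ] with x hx
    refine (abs_hess_le hα w x).trans ?_
    gcongr
  set a := ‖w‖ ^ (-α) with ha
  set P2 := ‖w‖ ^ (-α - 2) with hP2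
  set P3 := ‖w‖ ^ (-α - 3) with hP3
  have ha0 : 0 < a := by positivity
  have hP20 : 0 < P2 := by positivity
  have hP30 : 0 < P3 := by positivity
  have hP23 : P2 = P3 * ‖w‖ := by
    rw [hP2, hP3, ← Real.rpow_add_one hw0.ne']; congr 1; ring
  have hP4 : ‖w‖ ^ (-(2 * α + 4)) = P2 ^ 2 := by
    rw [hP2, ← Real.rpow_natCast, ← Real.rpow_mul hw0.le]; congr 1; push_cast; ring
  set Q := ∫ x, hess α w x ∂μ with hQ
  set b := ∫ x, f x ∂μ with hb
  have hsmall : ∀ x : EuclideanSpace ℝ (Fin d), ‖x‖ ≤ R → ‖δ • x‖ ≤ R * δ := by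
    intro x hx
    rw [norm_smul, Real.norm_of_nonneg hδ.le, mul_comm]
    gcongr
  have hRδ : δ ≤ R * δ := by nlinarith
  have hGw : s ^ α * hatv d α (s • w) = a := hatv_outer hα hs (by nlinarith)
  have hfx : ∀ x : EuclideanSpace ℝ (Fin d), ‖x‖ ≤ R → f x = ‖w + δ • x‖ ^ (-α) := by
    intro x hx
    refine hatv_outer hα hs ?_
    have h1 := norm_sub_le_norm_add w (δ • x)
    have h2 := hsmall x hx
    have h3 : δ ≤ ‖w + δ • x‖ := by linarith
    exact hsδ.trans (by gcongr)
  have hTb : |b - (a + δ ^ 2 / 2 * Q)| ≤ C * R ^ 3 * δ ^ 3 * P3 := by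
    set φ : EuclideanSpace ℝ (Fin d) → ℝ :=
      fun x => a - α * P2 * δ * inner ℝ w x + δ ^ 2 / 2 * hess α w x with hφ
    have hin : Integrable (fun x => inner ℝ w x) μ := hidint.const_inner w
    have hlin : Integrable (fun x => a - α * P2 * δ * inner ℝ w x) μ :=
      (integrable_const a).sub (hin.const_mul _)
    have hφi : Integrable φ μ := hlin.add (hhint.const_mul _)
    have hφint : ∫ x, φ x ∂μ = a + δ ^ 2 / 2 * Q := by
      simp only [hφ]
      rw [integral_add hlin (hhint.const_mul _),
        integral_sub (integrable_const a) (hin.const_mul _), integral_const_mul,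
        integral_const_mul, integral_inner hidint, hcent]
      simp [hQ]
    rw [← hφint, hb, ← integral_sub hfint hφi]
    have := norm_integral_le_of_norm_le_const (f := fun x => f x - φ x)
      (C := C * R ^ 3 * δ ^ 3 * P3) (μ := μ) (by
        filter_upwards [hμ] with x hx
        have h1 := hT w (δ • x) hwne (by linarith [hsmall x hx])
        have h2 : hess α w (δ • x) = δ ^ 2 * hess α w x := by
          unfold hess
          rw [inner_smul_right, norm_smul, Real.norm_of_nonneg hδ.le]; ring
        rw [h2, inner_smul_right, ← hfx x hx] at h1
        have h3 : ‖δ • x‖ ^ 3 ≤ (R * δ) ^ 3 := by gcongr; exact hsmall x hx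
        calc ‖f x - φ x‖ ≤ C * ‖δ • x‖ ^ 3 * P3 := by
              refine le_of_eq_of_le ?_ h1
              rw [hφ, Real.norm_eq_abs]; congr 1; ring
          _ ≤ C * (R * δ) ^ 3 * P3 := by gcongr
          _ = _ := by ring)
    simpa using this
  have hQb : |Q| ≤ α * (α + 3) * P2 * R ^ 2 := abs_integral_hess_le hα μ hμ w
  have hba : |b - a| ≤ δ ^ 2 * R ^ 2 * P2 * (α * (α + 3) + C) := by
    have h1 : |b - a| ≤ |b - (a + δ ^ 2 / 2 * Q)| + |δ ^ 2 / 2 * Q| := by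
      refine le_of_eq_of_le ?_ (abs_add_le _ _)
      congr 1; ring
    rw [abs_mul, abs_of_pos (by positivity : 0 < δ ^ 2 / 2)] at h1
    have h2 : R * δ * P3 ≤ P2 := by
      rw [hP23, mul_comm]
      gcongr
      nlinarith
    have h3 : C * R ^ 3 * δ ^ 3 * P3 ≤ C * R ^ 2 * δ ^ 2 * P2 := by
      calc _ = C * R ^ 2 * δ ^ 2 * (R * δ * P3) := by ring
        _ ≤ _ := by gcongr
    have h4 : δ ^ 2 / 2 * |Q| ≤ δ ^ 2 / 2 * (α * (α + 3) * P2 * R ^ 2) := by gcongr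
    have h5 : 0 ≤ δ ^ 2 * (α * (α + 3) * P2 * R ^ 2) := by positivity
    linarith
  set m := (3 / 2 : ℝ) ^ (-α) * a with hm
  have hma : m ≤ a := by
    have : (3 / 2 : ℝ) ^ (-α) ≤ 1 :=
      Real.rpow_le_one_of_one_le_of_nonpos (by norm_num) (by linarith)
    rw [hm]; nlinarith
  have hmb : m ≤ b := by
    have : ∫ _x, m ∂μ ≤ ∫ x, f x ∂μ := by
      refine integral_mono_ae (integrable_const m) hfint ?_
      filter_upwards [hμ] with x hx
      have h1 := hsmall x hx
      rw [hm, ha, ← Real.mul_rpow (by norm_num) hw0.le]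
      refine hatv_lower hα hs ?_ ?_
      · linarith [norm_add_le w (δ • x)]
      · nlinarith
    simpa using this
  have hexp := exp_taylor a b m hma hmb
  have hsq : (b - a) ^ 2 ≤ (δ ^ 2 * R ^ 2 * P2 * (α * (α + 3) + C)) ^ 2 := by
    rw [← sq_abs]; gcongr
  have hea := Real.exp_pos (-a)
  have hem := Real.exp_pos (-m)
  have hfinal : |Real.exp (-a) - Real.exp (-b) - δ ^ 2 * (1 / 2 * (Real.exp (-a) * Q))| ≤
      δ ^ 2 * (δ * (C * R ^ 3 * (Real.exp (-a) * P3) +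
        R ^ 4 * (α * (α + 3) + C) ^ 2 * (Real.exp (-m) * P2 ^ 2))) := by
    have e1 : Real.exp (-a) - Real.exp (-b) - δ ^ 2 * (1 / 2 * (Real.exp (-a) * Q)) =
        (Real.exp (-a) - Real.exp (-b) - Real.exp (-a) * (b - a)) +
          Real.exp (-a) * (b - (a + δ ^ 2 / 2 * Q)) := by ring
    rw [e1]
    refine (abs_add_le _ _).trans ?_
    rw [abs_mul, Real.abs_exp]
    have e2 : (b - a) ^ 2 * Real.exp (-m) ≤
        (δ ^ 2 * R ^ 2 * P2 * (α * (α + 3) + C)) ^ 2 * Real.exp (-m) := by gcongr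
    have e3 : Real.exp (-a) * |b - (a + δ ^ 2 / 2 * Q)| ≤
        Real.exp (-a) * (C * R ^ 3 * δ ^ 3 * P3) := by gcongr
    have e4 : (δ ^ 2 * R ^ 2 * P2 * (α * (α + 3) + C)) ^ 2 * Real.exp (-m) ≤
        δ ^ 3 * (R ^ 4 * (α * (α + 3) + C) ^ 2 * (Real.exp (-m) * P2 ^ 2)) := by
      calc _ = δ ^ 4 * (R ^ 4 * (α * (α + 3) + C) ^ 2 * (Real.exp (-m) * P2 ^ 2)) := by ring
        _ ≤ _ := by
          gcongr ?_ * _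
          exact pow_le_pow_of_le_one hδ.le hδ1 (by norm_num)
    linarith
  rw [hGw, hP4]
  have hδ2 : 0 < δ ^ 2 := by positivity
  have e5 : (δ ^ 2)⁻¹ * (Real.exp (-a) - Real.exp (-b)) - 1 / 2 * (Real.exp (-a) * Q) =
      (δ ^ 2)⁻¹ * (Real.exp (-a) - Real.exp (-b) - δ ^ 2 * (1 / 2 * (Real.exp (-a) * Q))) := by
    field_simp
  rw [e5, abs_mul, abs_of_pos (inv_pos.2 hδ2), inv_mul_le_iff₀ hδ2]
  exact hfinal

/-- Estimate near the origin, where both exponentials are super-polynomially small in `δ`. -/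
lemma inner_bound (d : ℕ) {α R : ℝ} (hα : 1 ≤ α) (hR : 1 ≤ R) {s δ : ℝ} (hs : 0 < s) (hδ : 0 < δ)
    (hδ1 : δ ≤ 1) (hsδ : 1 ≤ s * δ) (μ : Measure (EuclideanSpace ℝ (Fin d)))
    [IsProbabilityMeasure μ] (hμ : ∀ᵐ x ∂μ, ‖x‖ ≤ R) (w : EuclideanSpace ℝ (Fin d))
    (hw : ‖w‖ ≤ 2 * R * δ) :
    |(δ ^ 2)⁻¹ * (Real.exp (-(s ^ α * hatv d α (s • w))) -
          Real.exp (-∫ x, s ^ α * hatv d α (s • (w + δ • x)) ∂μ)) -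
        1 / 2 * (Real.exp (-‖w‖ ^ (-α)) * ∫ x, hess α w x ∂μ)| ≤
      δ * (6 * (3 * R) ^ (3 * α) +
        α * (α + 3) * R ^ 3 * (Real.exp (-‖w‖ ^ (-α)) * ‖w‖ ^ (-α - 3))) := by
  have hα0 : 0 < α := by linarith
  have hRδ : δ ≤ R * δ := by nlinarith
  set u := (3 * R * δ) ^ (-α) with hu
  have hu0 : 0 < u := by positivity
  have h3 : 1 ≤ s * (3 * R * δ) := by nlinarith
  have h1 : u ≤ s ^ α * hatv d α (s • w) := hatv_lower hα0 hs (by linarith) h3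
  have h2 : u ≤ ∫ x, s ^ α * hatv d α (s • (w + δ • x)) ∂μ := by
    have : ∫ _x, u ∂μ ≤ ∫ x, s ^ α * hatv d α (s • (w + δ • x)) ∂μ := by
      refine integral_mono_ae (integrable_const u) (integrable_hatv α _ s μ (by fun_prop)) ?_
      filter_upwards [hμ] with x hx
      refine hatv_lower hα0 hs ?_ h3
      have : ‖δ • x‖ ≤ R * δ := by
        rw [norm_smul, Real.norm_of_nonneg hδ.le, mul_comm]; gcongr
      linarith [norm_add_le w (δ • x)]
    simpa using this
  have hF : |Real.exp (-(s ^ α * hatv d α (s • w))) -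
      Real.exp (-∫ x, s ^ α * hatv d α (s • (w + δ • x)) ∂μ)| ≤ Real.exp (-u) := by
    have e1 := Real.exp_le_exp.2 (neg_le_neg h1)
    have e2 := Real.exp_le_exp.2 (neg_le_neg h2)
    rw [abs_le]
    constructor <;> linarith [Real.exp_pos (-(s ^ α * hatv d α (s • w))),
      Real.exp_pos (-∫ x, s ^ α * hatv d α (s • (w + δ • x)) ∂μ)]
  have hexp : Real.exp (-u) ≤ δ ^ 2 * (δ * (6 * (3 * R) ^ (3 * α))) := by
    have e1 : u ^ 3 / 6 ≤ Real.exp u := by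
      simpa [Nat.factorial] using Real.pow_div_factorial_le_exp u hu0.le 3
    have e2 : u ^ 3 * (3 * R * δ) ^ (3 * α) = 1 := by
      rw [hu, ← Real.rpow_natCast, ← Real.rpow_mul (by positivity),
        ← Real.rpow_add (by positivity)]
      rw [show -α * ((3:ℕ):ℝ) + 3 * α = 0 by push_cast; ring, Real.rpow_zero]
    have e3 : Real.exp (-u) ≤ 6 * (3 * R * δ) ^ (3 * α) := by
      rw [Real.exp_neg, inv_le_iff_one_le_mul₀ (Real.exp_pos u)]
      calc (1:ℝ) = 6 * (3 * R * δ) ^ (3 * α) * (u ^ 3 / 6) := by linear_combination -e2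
        _ ≤ _ := by gcongr
    have e4 : δ ^ (3 * α) ≤ δ ^ 3 := by
      rw [← Real.rpow_natCast]
      exact Real.rpow_le_rpow_of_exponent_ge hδ hδ1 (by push_cast; linarith)
    rw [Real.mul_rpow (by positivity) hδ.le] at e3
    calc _ ≤ _ := e3
      _ ≤ 6 * ((3 * R) ^ (3 * α) * δ ^ 3) := by gcongr
      _ = _ := by ring
  have hM : |1 / 2 * (Real.exp (-‖w‖ ^ (-α)) * ∫ x, hess α w x ∂μ)| ≤
      δ * (α * (α + 3) * R ^ 3 * (Real.exp (-‖w‖ ^ (-α)) * ‖w‖ ^ (-α - 3))) := by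
    rw [abs_mul, abs_mul, Real.abs_exp, abs_of_pos (by norm_num : (0:ℝ) < 1 / 2)]
    have e1 := abs_integral_hess_le hα0 μ hμ w
    have e2 : ‖w‖ ^ (-α - 2) ≤ 2 * R * δ * ‖w‖ ^ (-α - 3) := by
      rcases eq_or_ne w 0 with rfl | hw'
      · rw [norm_zero, Real.zero_rpow (by linarith), Real.zero_rpow (by linarith)]; simp
      · have : ‖w‖ ^ (-α - 2) = ‖w‖ * ‖w‖ ^ (-α - 3) := by
          rw [mul_comm, ← Real.rpow_add_one (norm_ne_zero_iff.2 hw')]; congr 1; ring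
        rw [this]; gcongr
    calc _ ≤ 1 / 2 * (Real.exp (-‖w‖ ^ (-α)) *
            (α * (α + 3) * (2 * R * δ * ‖w‖ ^ (-α - 3)) * R ^ 2)) := by
          gcongr
          exact e1.trans (by gcongr)
      _ = _ := by ring
  refine (abs_sub _ _).trans ?_
  rw [abs_mul, abs_of_pos (by positivity : 0 < (δ ^ 2)⁻¹), mul_add]
  refine add_le_add ?_ hM
  rw [inv_mul_le_iff₀ (by positivity)]
  exact hF.trans hexp

/-! ### Integrated error bound and rescaling -/

/-- Quantitative form of the convergence in the rescaled variables, for centred measures: the error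
is of order `δ`, with a constant depending only on `d`, `α` and the radius `R`. -/
lemma core (d : ℕ) (hd : 1 ≤ d) {α R : ℝ} (hα₁ : (d : ℝ) < α) (hR : 1 ≤ R) :
    ∃ C : ℝ, ∀ (s δ : ℝ), 0 < s → 0 < δ → δ ≤ 1 → 1 ≤ s * δ →
      ∀ (μ : Measure (EuclideanSpace ℝ (Fin d))) [IsProbabilityMeasure μ],
      (∀ᵐ x ∂μ, ‖x‖ ≤ R) → ∫ x, x ∂μ = 0 →
      |(δ ^ 2)⁻¹ * (∫ w, (Real.exp (-(s ^ α * hatv d α (s • w))) -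
          Real.exp (-∫ x, s ^ α * hatv d α (s • (w + δ • x)) ∂μ))) -
        1 / 2 * (α * sigmad d / d * Real.Gamma ((2 * α - d + 2) / α) * ∫ x, ‖x‖ ^ 2 ∂μ)| ≤
      δ * C := by
  have hd1 : (1:ℝ) ≤ d := by exact_mod_cast hd
  have hα : 0 < α := by linarith
  obtain ⟨B, D, hB, hD, hout⟩ := outer_bound d hα hR
  set A := 6 * (3 * R) ^ (3 * α)
  have hA : 0 ≤ A := by positivity
  set B' := α * (α + 3) * R ^ 3
  have hB' : 0 ≤ B' := by positivity
  set S : Set (EuclideanSpace ℝ (Fin d)) := Metric.closedBall 0 (2 * R) with hS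
  set h : EuclideanSpace ℝ (Fin d) → ℝ := fun w => S.indicator (fun _ => A) w +
    ((B + B') * (Real.exp (-‖w‖ ^ (-α)) * ‖w‖ ^ (-α - 3)) +
      D * (Real.exp (-((3 / 2) ^ (-α) * ‖w‖ ^ (-α))) * ‖w‖ ^ (-(2 * α + 4)))) with hh
  have hhint : Integrable h := by
    refine Integrable.add ?_ (Integrable.add (Integrable.const_mul ?_ _)
      (Integrable.const_mul ?_ _))
    · rw [integrable_indicator_iff Metric.isClosed_closedBall.measurableSet]
      exact integrableOn_const (by
        exact (isCompact_closedBall (0 : EuclideanSpace ℝ (Fin d)) (2 * R)).measure_lt_top.ne)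
    · have := integrable_radial d hd (α := α) (c := 1) (q := α + 3) hα one_pos (by linarith)
      simpa only [one_mul, show -(α + 3) = -α - 3 by ring] using this
    · exact integrable_radial d hd hα (by positivity) (by linarith)
  refine ⟨∫ w, h w, ?_⟩
  intro s δ hs hδ hδ1 hsδ μ _ hμ hcent
  set F : EuclideanSpace ℝ (Fin d) → ℝ := fun w => Real.exp (-(s ^ α * hatv d α (s • w))) -
    Real.exp (-∫ x, s ^ α * hatv d α (s • (w + δ • x)) ∂μ) with hF
  set M : EuclideanSpace ℝ (Fin d) → ℝ :=
    fun w => Real.exp (-‖w‖ ^ (-α)) * ∫ x, hess α w x ∂μ with hM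
  obtain ⟨hMint, hMval⟩ := integral_main d hd hα₁ μ hμ
  have hbound : ∀ w, ‖(δ ^ 2)⁻¹ * F w - 1 / 2 * M w‖ ≤ δ * h w := by
    intro w
    have p1 : 0 ≤ Real.exp (-‖w‖ ^ (-α)) * ‖w‖ ^ (-α - 3) := by positivity
    have p2 : 0 ≤ Real.exp (-((3 / 2) ^ (-α) * ‖w‖ ^ (-α))) * ‖w‖ ^ (-(2 * α + 4)) := by
      positivity
    rcases le_total (2 * R * δ) ‖w‖ with hw | hw
    · refine (hout s δ hs hδ hδ1 hsδ μ hμ hcent w hw).trans ?_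
      refine mul_le_mul_of_nonneg_left ?_ hδ.le
      have p3 : 0 ≤ S.indicator (fun _ => A) w := Set.indicator_nonneg (fun _ _ => hA) w
      simp only [hh]
      nlinarith [mul_nonneg hB' p1]
    · refine (inner_bound d (by linarith) hR hs hδ hδ1 hsδ μ hμ w hw).trans ?_
      refine mul_le_mul_of_nonneg_left ?_ hδ.le
      have hwS : w ∈ S := by
        rw [hS, mem_closedBall_zero_iff]
        nlinarith
      simp only [hh]
      rw [Set.indicator_of_mem hwS]
      nlinarith [mul_nonneg hB p1, mul_nonneg hD p2]
  have hFmeas : AEStronglyMeasurable F volume := by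
    have m1 : Measurable fun w : EuclideanSpace ℝ (Fin d) => s ^ α * hatv d α (s • w) :=
      ((measurable_hatv d α).comp (measurable_const_smul s)).const_mul _
    have m2 : Measurable fun p : EuclideanSpace ℝ (Fin d) × EuclideanSpace ℝ (Fin d) =>
        s ^ α * hatv d α (s • (p.1 + δ • p.2)) :=
      ((measurable_hatv d α).comp (by fun_prop)).const_mul _
    have m3 := m2.stronglyMeasurable.integral_prod_right' (ν := μ)
    exact (m1.neg.exp.sub m3.measurable.neg.exp).aestronglyMeasurable
  have herr : Integrable fun w => (δ ^ 2)⁻¹ * F w - 1 / 2 * M w :=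
    (hhint.const_mul δ).mono' ((hFmeas.const_mul _).sub (hMint.const_mul _).aestronglyMeasurable)
      (ae_of_all _ hbound)
  have hFint : Integrable fun w => (δ ^ 2)⁻¹ * F w := by
    have := herr.add (hMint.const_mul (1 / 2))
    refine this.congr (ae_of_all _ fun w => ?_)
    simp [hM]
  rw [← hMval, ← integral_const_mul, ← integral_const_mul,
    ← integral_sub hFint (hMint.const_mul _), ← integral_const_mul]
  exact norm_integral_le_of_norm_le (hhint.const_mul δ) (ae_of_all _ hbound)

/-- Rescaling of the space integral by `y = m - w / δ`. -/
lemma rescale (d : ℕ) {α s δ : ℝ} (hδ : 0 < δ)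
    (μ : Measure (EuclideanSpace ℝ (Fin d))) (m : EuclideanSpace ℝ (Fin d)) :
    ∫ y : EuclideanSpace ℝ (Fin d), (Real.exp (-(s ^ α * hatv d α ((s * δ) • (m - y)))) -
        Real.exp (-(s ^ α * ∫ x, hatv d α ((s * δ) • (x - y)) ∂μ))) =
      (δ ^ d)⁻¹ * ∫ w, (Real.exp (-(s ^ α * hatv d α (s • w))) -
          Real.exp (-∫ x, s ^ α * hatv d α (s • (w + δ • x)) ∂(μ.map fun x => x - m))) := by
  set F : EuclideanSpace ℝ (Fin d) → ℝ := fun w => Real.exp (-(s ^ α * hatv d α (s • w))) -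
    Real.exp (-∫ x, s ^ α * hatv d α (s • (w + δ • x)) ∂(μ.map fun x => x - m)) with hF
  have h1 : ∀ y : EuclideanSpace ℝ (Fin d),
      Real.exp (-(s ^ α * hatv d α ((s * δ) • (m - y)))) -
        Real.exp (-(s ^ α * ∫ x, hatv d α ((s * δ) • (x - y)) ∂μ)) = F (δ • (m - y)) := by
    intro y
    simp only [hF]
    have hemb : MeasurableEmbedding fun x : EuclideanSpace ℝ (Fin d) => x - m :=
      (MeasurableEquiv.subRight m).measurableEmbedding
    rw [hemb.integral_map, ← integral_const_mul]
    congr 4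
    · rw [smul_smul]
    · ext x
      rw [← smul_add, smul_smul]
      congr 3
      abel
  simp_rw [h1]
  rw [integral_sub_left_eq_self (fun y => F (δ • y)) volume m, Measure.integral_comp_smul]
  simp [abs_of_pos hδ]

/-- Uniform convergence of the functional `J_t` on probability measures supported in a
compact set `K` to the quadratic functional. -/
theorem stmt0 (d : ℕ) (hd : 1 ≤ d) (α ν : ℝ) (hα₁ : (d : ℝ) < α) (hα₂ : α < d + 2)
    (hν : 0 < ν) (K : Set (EuclideanSpace ℝ (Fin d))) (hK : IsCompact K) :
    ∀ ε > 0, ∃ T : ℝ, ∀ t ≥ T,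
      ∀ μ : Measure (EuclideanSpace ℝ (Fin d)), IsProbabilityMeasure μ → μ Kᶜ = 0 →
        |ν * t ^ (-(α + d - 2) / (2 * α)) * (t ^ ((α - d + 2) / (4 * α))) ^ (d : ℕ) *
            (∫ y : EuclideanSpace ℝ (Fin d),
              (Real.exp (-(t * hatv d α ((t ^ ((α - d + 2) / (4 * α))) •
                  ((∫ x, x ∂μ) - y)))) -
               Real.exp (-(t * ∫ x, hatv d α ((t ^ ((α - d + 2) / (4 * α))) • (x - y)) ∂μ))))
          - (ν * α * sigmad d / (2 * d)) * Real.Gamma ((2 * α - d + 2) / α) *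
              (∫ x, ‖x - ∫ x', x' ∂μ‖ ^ 2 ∂μ)| < ε := by
  intro ε hε
  have hd0 : (0:ℝ) ≤ d := Nat.cast_nonneg d
  have hα : 0 < α := by linarith
  obtain ⟨R₀, hR₀⟩ := hK.isBounded.exists_norm_le
  set R : ℝ := 2 * |R₀| + 1 with hR
  have hR1 : 1 ≤ R := by rw [hR]; linarith [abs_nonneg R₀]
  obtain ⟨C, hC⟩ := core d hd hα₁ hR1
  set κ : ℝ := (d + 2 - α) / (4 * α) with hκ
  have hκ0 : 0 < κ := div_pos (by linarith) (by linarith)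
  have hlim : Tendsto (fun t : ℝ => ν * (t ^ (-κ) * C)) atTop (nhds 0) := by
    simpa using ((tendsto_rpow_neg_atTop hκ0).mul_const C).const_mul ν
  obtain ⟨T, hT⟩ := eventually_atTop.1 ((hlim.eventually_lt_const hε).and (eventually_ge_atTop 1))
  refine ⟨T, fun t ht μ hμ hμK => ?_⟩
  obtain ⟨hsmall, ht1⟩ := hT t ht
  have ht0 : 0 < t := by linarith
  set m := ∫ x, x ∂μ with hm
  set s := t ^ (1 / α) with hs
  set δ := t ^ (-κ) with hδ
  have hs0 : 0 < s := by positivity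
  have hδ0 : 0 < δ := by positivity
  have hδ1 : δ ≤ 1 := Real.rpow_le_one_of_one_le_of_nonpos ht1 (by linarith)
  have hst : s ^ α = t := by
    rw [hs, ← Real.rpow_mul ht0.le, one_div_mul_cancel hα.ne', Real.rpow_one]
  have hr : t ^ ((α - d + 2) / (4 * α)) = s * δ := by
    rw [hs, hδ, ← Real.rpow_add ht0, hκ]; congr 1; field_simp; ring
  have hsδ : 1 ≤ s * δ := by
    rw [← hr]; exact Real.one_le_rpow ht1 (div_nonneg (by linarith) (by linarith))
  have hpre : t ^ (-(α + d - 2) / (2 * α)) * s ^ d = (δ ^ 2)⁻¹ := by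
    rw [hs, hδ, ← Real.rpow_natCast, ← Real.rpow_natCast, ← Real.rpow_mul ht0.le,
      ← Real.rpow_mul ht0.le, ← Real.rpow_neg ht0.le, ← Real.rpow_add ht0, hκ]
    congr 1; push_cast; field_simp; ring
  have haeK : ∀ᵐ x ∂μ, ‖x‖ ≤ R₀ := by
    have : ∀ᵐ x ∂μ, x ∈ K := by rw [ae_iff]; exact hμK
    filter_upwards [this] with x hx using hR₀ x hx
  have hmR : ‖m‖ ≤ R₀ := by simpa using norm_integral_le_of_norm_le_const haeK
  have hidint : Integrable (fun x : EuclideanSpace ℝ (Fin d) => x) μ :=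
    (integrable_const R₀).mono' measurable_id.aestronglyMeasurable haeK
  have hsub : Measurable fun x : EuclideanSpace ℝ (Fin d) => x - m := by fun_prop
  have hemb : MeasurableEmbedding fun x : EuclideanSpace ℝ (Fin d) => x - m :=
    (MeasurableEquiv.subRight m).measurableEmbedding
  have hprob : IsProbabilityMeasure (μ.map fun x => x - m) :=
    Measure.isProbabilityMeasure_map hsub.aemeasurable
  have hae' : ∀ᵐ x ∂(μ.map fun x => x - m), ‖x‖ ≤ R := by
    rw [hemb.ae_map_iff]
    filter_upwards [haeK] with x hx
    have := norm_sub_le x m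
    have := le_abs_self R₀
    rw [hR]; linarith
  have hcent : ∫ x, x ∂(μ.map fun x => x - m) = 0 := by
    rw [hemb.integral_map, integral_sub hidint (integrable_const m)]
    simp [hm]
  have key := hC s δ hs0 hδ0 hδ1 hsδ (μ.map fun x => x - m) hae' hcent
  have hres := rescale d (α := α) (s := s) hδ0 μ m
  rw [hst] at key hres
  rw [hemb.integral_map] at key
  rw [hr, hres]
  set I := ∫ w : EuclideanSpace ℝ (Fin d), (Real.exp (-(t * hatv d α (s • w))) -
    Real.exp (-∫ x, t * hatv d α (s • (w + δ • x)) ∂(μ.map fun x => x - m)))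
  have e1 : ν * t ^ (-(α + d - 2) / (2 * α)) * (s * δ) ^ d * ((δ ^ d)⁻¹ * I) =
      ν * ((δ ^ 2)⁻¹ * I) := by
    rw [← hpre, mul_pow]
    field_simp
  have e2 : ν * ((δ ^ 2)⁻¹ * I) - ν * α * sigmad d / (2 * d) *
      Real.Gamma ((2 * α - d + 2) / α) * (∫ x, ‖x - m‖ ^ 2 ∂μ) =
      ν * ((δ ^ 2)⁻¹ * I - 1 / 2 * (α * sigmad d / d * Real.Gamma ((2 * α - d + 2) / α) *
        ∫ x, ‖x - m‖ ^ 2 ∂μ)) := by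
    rw [show ν * α * sigmad d / (2 * d) = ν * (1 / 2 * (α * sigmad d / d)) by
      rw [mul_comm (2:ℝ), ← div_div]; ring]
    ring
  rw [e1, e2, abs_mul, abs_of_pos hν]
  exact (mul_le_mul_of_nonneg_left key hν.le).trans_lt hsmall
end

section
/- Let $d \ge 1$ be an integer and $\alpha > d$, and let $v(\eta) = |\eta|^{-\alpha}$ on $\mathbb{R}^d \setminus \{0\}$ with Hessian matrix $\mathrm{Hess}_v(\eta)$. Then for every $x \in \mathbb{R}^d$, $\int_{\mathbb{R}^d} \langle x, \mathrm{Hess}_v(\eta)\, x \rangle\, e^{-|\eta|^{-\alpha}}\,\mathrm{d}\eta = \frac{\alpha\,\sigma_d}{d}\,\Gamma\bigl(\tfrac{2\alpha-d+2}{\alpha}\bigr)\, |x|^2$, the integral being absolutely convergent. -/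
/-!
For `η ≠ 0` the Hessian form of `v(η) = ‖η‖ ^ (-α)` is
`α (α + 2) ‖η‖ ^ (-α - 4) ⟪η, x⟫² - α ‖η‖ ^ (-α - 2) ‖x‖²` (`hessian_norm_rpow`).
Reflections preserve Lebesgue measure and act transitively on spheres, so inside an integral
against a radial weight `⟪η, x⟫²` may be replaced by `‖x‖² ‖η‖² / d` (`integral_inner_sq_radial`).
The integral of the Hessian form against `e ^ (-v)` is therefore `‖x‖² α (α + 2 - d) / d` times the
integral of the radial function `‖η‖ ^ (-α - 2) e ^ (-‖η‖ ^ (-α))`. In polar coordinates, with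
`t = r ^ (-α)`, the latter is `(σ_d / α) Γ(s)`, where `s = (α + 2 - d) / α > 0`
(`integral_radialWeight`), and `s Γ(s) = Γ(s + 1)` gives the stated constant.
-/

open MeasureTheory Real Filter

open scoped RealInnerProductSpace

section Hessian

variable {E : Type*} [NormedAddCommGroup E] [InnerProductSpace ℝ E]

/-- The analogue of `hasFDerivAt_norm_rpow` for arbitrary real exponents, away from the origin. -/
lemma hasFDerivAt_norm_rpow_of_ne {η : E} (hη : η ≠ 0) (p : ℝ) :
    HasFDerivAt (fun y : E => ‖y‖ ^ p) ((p * ‖η‖ ^ (p - 2)) • innerSL ℝ η) η := by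
  apply HasStrictFDerivAt.hasFDerivAt
  convert! (hasStrictFDerivAt_norm_sq η).rpow_const (p := p / 2) (by simp [hη]) using 0
  simp_rw [← Real.rpow_natCast_mul (norm_nonneg _), ← Nat.cast_smul_eq_nsmul ℝ, smul_smul]
  ring_nf

lemma hessian_norm_rpow {η : E} (hη : η ≠ 0) (p : ℝ) (x : E) :
    (fderiv ℝ (fderiv ℝ (fun y : E => ‖y‖ ^ p)) η x) x =
      p * (p - 2) * (⟪η, x⟫ ^ 2 * ‖η‖ ^ (p - 4)) + p * ‖x‖ ^ 2 * ‖η‖ ^ (p - 2) := by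
  have h1 : fderiv ℝ (fun y : E => ‖y‖ ^ p) =ᶠ[nhds η]
      fun y => (p * ‖y‖ ^ (p - 2)) • innerSL ℝ y := by
    filter_upwards [isOpen_ne.mem_nhds hη] with y hy
    exact (hasFDerivAt_norm_rpow_of_ne hy p).fderiv
  have h2 := ((hasFDerivAt_norm_rpow_of_ne hη (p - 2)).const_mul p).smul
    (innerSL ℝ (E := E)).hasFDerivAt
  rw [(h2.congr_of_eventuallyEq h1).fderiv]
  have h3 : p - 2 - 2 = p - 4 := by ring
  have h4 (a b : E) : (innerSL ℝ (E := E)) a b = ⟪a, b⟫ := rfl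
  simp only [add_apply, smul_apply,
    ContinuousLinearMap.smulRight_apply, smul_eq_mul, h3]
  -- `innerSL ℝ` occurs as a real-linear map here, equal to the semilinear one only by unfolding.
  erw [h4, h4]
  rw [real_inner_self_eq_norm_sq]
  ring

end Hessian

section Isotropy

variable {d : ℕ}

lemma integrable_inner_sq_radial {k : ℝ → ℝ} (hk : Measurable k)
    (hint : Integrable (fun η : EuclideanSpace ℝ (Fin d) => ‖η‖ ^ 2 * k ‖η‖))
    (x : EuclideanSpace ℝ (Fin d)) :
    Integrable (fun η : EuclideanSpace ℝ (Fin d) => ⟪η, x⟫ ^ 2 * k ‖η‖) := by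
  refine (hint.norm.const_mul (‖x‖ ^ 2)).mono' ?_ (Eventually.of_forall fun η => ?_)
  · exact (by fun_prop : Measurable _).aestronglyMeasurable
  · have h : ⟪η, x⟫ ^ 2 ≤ ‖x‖ ^ 2 * ‖η‖ ^ 2 := by
      rw [← mul_pow, ← sq_abs, mul_comm]
      gcongr
      exact abs_real_inner_le_norm η x
    simp only [norm_mul, norm_pow, Real.norm_eq_abs, sq_abs]
    rw [← mul_assoc]
    gcongr

/-- The second moment form of a radial weight depends only on the norm of its argument, since some
reflection carries `x` to `y`. -/
lemma integral_inner_sq_radial_congr (k : ℝ → ℝ) {x y : EuclideanSpace ℝ (Fin d)}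
    (hxy : ‖x‖ = ‖y‖) :
    ∫ η : EuclideanSpace ℝ (Fin d), ⟪η, x⟫ ^ 2 * k ‖η‖ =
      ∫ η : EuclideanSpace ℝ (Fin d), ⟪η, y⟫ ^ 2 * k ‖η‖ := by
  set R := Submodule.reflection (ℝ ∙ (x - y))ᗮ
  have hR : R x = y := Submodule.reflection_sub hxy
  rw [← R.measurePreserving.integral_comp R.toHomeomorph.measurableEmbedding
    (fun η => ⟪η, y⟫ ^ 2 * k ‖η‖)]
  simp [← hR, LinearIsometryEquiv.inner_map_map]

/-- Isotropy: a radial weight has second moment form `‖x‖² / d` times its total second moment. -/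
lemma integral_inner_sq_radial {k : ℝ → ℝ} (hk : Measurable k)
    (hint : Integrable (fun η : EuclideanSpace ℝ (Fin d) => ‖η‖ ^ 2 * k ‖η‖))
    (x : EuclideanSpace ℝ (Fin d)) :
    d * ∫ η : EuclideanSpace ℝ (Fin d), ⟪η, x⟫ ^ 2 * k ‖η‖ =
      ‖x‖ ^ 2 * ∫ η : EuclideanSpace ℝ (Fin d), ‖η‖ ^ 2 * k ‖η‖ := by
  have hb (i : Fin d) : ‖x‖ ^ 2 * ∫ η : EuclideanSpace ℝ (Fin d), η i ^ 2 * k ‖η‖ =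
      ∫ η : EuclideanSpace ℝ (Fin d), ⟪η, x⟫ ^ 2 * k ‖η‖ := by
    rw [integral_inner_sq_radial_congr k (y := ‖x‖ • EuclideanSpace.single i (1 : ℝ))
      (by simp [norm_smul]), ← integral_const_mul]
    congr 1 with η
    simp [inner_smul_right, EuclideanSpace.inner_single_right]
    ring
  have hi (i : Fin d) : Integrable (fun η : EuclideanSpace ℝ (Fin d) => η i ^ 2 * k ‖η‖) := by
    simpa [EuclideanSpace.inner_single_right] using
      integrable_inner_sq_radial hk hint (EuclideanSpace.single i (1 : ℝ))
  have hs : ∫ η : EuclideanSpace ℝ (Fin d), ‖η‖ ^ 2 * k ‖η‖ =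
      ∑ i : Fin d, ∫ η : EuclideanSpace ℝ (Fin d), η i ^ 2 * k ‖η‖ := by
    rw [← integral_finsetSum _ fun i _ => hi i]
    congr 1 with η
    rw [EuclideanSpace.real_norm_sq_eq, Finset.sum_mul]
  rw [hs, Finset.mul_sum, Finset.sum_congr rfl fun i _ => hb i]
  simp

end Isotropy

section Radial

/-- The radial profile `r ^ (-α - 2) e ^ (-r ^ (-α))`. -/
noncomputable def radialWeight (α r : ℝ) : ℝ := r ^ (-α - 2) * Real.exp (-r ^ (-α))

/-- The polar density of `radialWeight` is the pullback of the integrand of `Γ((α + 2 - d) / α)`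
under `t = r ^ (-α)`, up to the constant `α` of the Jacobian. -/
lemma pow_mul_radialWeight {d : ℕ} (hd : 1 ≤ d) {α : ℝ} (hα : 0 < α) {r : ℝ} (hr : 0 < r) :
    r ^ (-α - 1) * (Real.exp (-r ^ (-α)) * (r ^ (-α)) ^ ((α + 2 - d) / α - 1)) =
      r ^ (d - 1) * radialWeight α r := by
  have h1 : r ^ (d - 1) = r ^ ((d : ℝ) - 1) := by
    rw [← Real.rpow_natCast, Nat.cast_sub hd, Nat.cast_one]
  rw [radialWeight, h1, ← Real.rpow_mul hr.le, mul_left_comm, ← Real.rpow_add hr, ← mul_assoc,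
    ← Real.rpow_add hr, mul_comm]
  congr 2
  field_simp
  ring

variable {d : ℕ}

lemma integrable_radialWeight (hd : 1 ≤ d) {α : ℝ} (hα : (d : ℝ) < α) :
    Integrable (fun η : EuclideanSpace ℝ (Fin d) => radialWeight α ‖η‖) := by
  have hα0 : 0 < α := (Nat.cast_nonneg d).trans_lt hα
  have : Nonempty (Fin d) := ⟨⟨0, hd⟩⟩
  have hs : 0 < (α + 2 - d) / α := div_pos (by linarith) hα0
  refine (integrable_fun_norm_addHaar volume (f := radialWeight α)).2 ?_
  refine ((integrableOn_Ioi_comp_rpow_iff' _ (neg_ne_zero.2 hα0.ne')).2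
    (Real.GammaIntegral_convergent hs)).congr_fun (fun r hr => ?_) measurableSet_Ioi
  simpa using pow_mul_radialWeight hd hα0 hr

lemma integral_radialWeight (hd : 1 ≤ d) {α : ℝ} (hα : (d : ℝ) < α) :
    α * ∫ η : EuclideanSpace ℝ (Fin d), radialWeight α ‖η‖ =
      sigmad d * Real.Gamma ((α + 2 - d) / α) := by
  have hα0 : 0 < α := (Nat.cast_nonneg d).trans_lt hα
  have : Nonempty (Fin d) := ⟨⟨0, hd⟩⟩
  have hs : 0 < (α + 2 - d) / α := div_pos (by linarith) hα0
  have h : Real.Gamma ((α + 2 - d) / α) =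
      α * ∫ r in Set.Ioi (0 : ℝ), r ^ (d - 1) * radialWeight α r := by
    rw [Real.Gamma_eq_integral hs, ← integral_comp_rpow_Ioi _ (neg_ne_zero.2 hα0.ne'),
      ← integral_const_mul]
    refine setIntegral_congr_fun measurableSet_Ioi fun r hr => ?_
    simp only [abs_neg, abs_of_pos hα0, smul_eq_mul, mul_assoc]
    rw [pow_mul_radialWeight hd hα0 hr]
  rw [integral_fun_norm_addHaar volume (radialWeight α), h, sigmad]
  simp [Measure.real]
  ring

end Radial

/-- For `v(η) = |η|^{-α}`,
`∫ ⟨x, Hess_v(η) x⟩ e^{-|η|^{-α}} dη = (α σ_d / d) Γ((2α-d+2)/α) |x|²`,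
the integral being absolutely convergent. -/
theorem stmt4 (d : ℕ) (hd : 1 ≤ d) (α : ℝ) (hα : (d : ℝ) < α)
    (x : EuclideanSpace ℝ (Fin d)) :
    Integrable (fun η : EuclideanSpace ℝ (Fin d) =>
      (fderiv ℝ (fderiv ℝ (fun η : EuclideanSpace ℝ (Fin d) => ‖η‖ ^ (-α))) η x) x *
        Real.exp (-‖η‖ ^ (-α))) ∧
    ∫ η : EuclideanSpace ℝ (Fin d),
        (fderiv ℝ (fderiv ℝ (fun η : EuclideanSpace ℝ (Fin d) => ‖η‖ ^ (-α))) η x) x *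
          Real.exp (-‖η‖ ^ (-α))
      = (α * sigmad d / d) * Real.Gamma ((2 * α - d + 2) / α) * ‖x‖ ^ 2 := by
  have hd0 : (0 : ℝ) < d := by exact_mod_cast hd
  have hα0 : 0 < α := hd0.trans hα
  have : Nonempty (Fin d) := ⟨⟨0, hd⟩⟩
  have hne : ∀ᵐ η : EuclideanSpace ℝ (Fin d), η ≠ 0 := by
    simp [ae_iff]
  let k : ℝ → ℝ := fun r => r ^ (-α - 4) * Real.exp (-r ^ (-α))
  have hk : Measurable k := by fun_prop
  have hkw : (fun η : EuclideanSpace ℝ (Fin d) => ‖η‖ ^ 2 * k ‖η‖) =ᵐ[volume]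
      fun η => radialWeight α ‖η‖ := by
    filter_upwards [hne] with η hη
    have hr : 0 < ‖η‖ := norm_pos_iff.2 hη
    simp only [k, radialWeight]
    rw [← mul_assoc, ← Real.rpow_natCast, ← Real.rpow_add hr]
    congr 2
    push_cast
    ring
  have hw := integrable_radialWeight hd hα
  have hkint := hw.congr hkw.symm
  have hkx := integrable_inner_sq_radial hk hkint x
  have heq : (fun η : EuclideanSpace ℝ (Fin d) =>
      (fderiv ℝ (fderiv ℝ (fun η : EuclideanSpace ℝ (Fin d) => ‖η‖ ^ (-α))) η x) x *
        Real.exp (-‖η‖ ^ (-α))) =ᵐ[volume]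
      fun η => α * (α + 2) * (⟪η, x⟫ ^ 2 * k ‖η‖) + -(α * ‖x‖ ^ 2) * radialWeight α ‖η‖ := by
    filter_upwards [hne] with η hη
    rw [hessian_norm_rpow hη]
    simp only [k, radialWeight]
    ring
  refine ⟨((hkx.const_mul _).add (hw.const_mul _)).congr heq.symm, ?_⟩
  have hiso := integral_inner_sq_radial hk hkint x
  rw [integral_congr_ae hkw] at hiso
  have hrad := integral_radialWeight hd hα
  have hΓ : Real.Gamma ((2 * α - d + 2) / α) =
      (α + 2 - d) / α * Real.Gamma ((α + 2 - d) / α) := by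
    rw [← Real.Gamma_add_one (div_pos (by linarith) hα0).ne']
    congr 1
    field_simp
    ring
  rw [integral_congr_ae heq, integral_add (hkx.const_mul _) (hw.const_mul _),
    integral_const_mul, integral_const_mul, hΓ]
  generalize (∫ η : EuclideanSpace ℝ (Fin d), ⟪η, x⟫ ^ 2 * k ‖η‖) = A at *
  generalize (∫ η : EuclideanSpace ℝ (Fin d), radialWeight α ‖η‖) = B at *
  have hA : A = ‖x‖ ^ 2 * B / d := by
    field_simp
    linarith
  calc _ = (α * B) * ((α + 2 - d) / d) * ‖x‖ ^ 2 := by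
        rw [hA]; field_simp; ring
    _ = _ := by rw [hrad]; field_simp
end

section
/- Let $d \ge 1$ be an integer, $\alpha \in (d, d+2)$, $\nu > 0$ and $M > 0$. Then, as $\rho \to \infty$, $\sup_{|x| \le M \rho^{(\alpha-d+2)/(4\alpha)}} \Bigl| \nu \int_{\mathbb{R}^d} \hat v(x-y)\, e^{-\rho\,\hat v(y)}\,\mathrm{d}y \; - \; \frac{\nu\sigma_d}{\alpha}\,\Gamma\bigl(\tfrac{\alpha-d}{\alpha}\bigr)\,\rho^{-\frac{\alpha-d}{\alpha}} \; - \; \frac{\nu\alpha\sigma_d}{2d}\,\Gamma\bigl(\tfrac{2\alpha-d+2}{\alpha}\bigr)\,\rho^{-\frac{\alpha-d+2}{\alpha}} |x|^2 \Bigr| \;=\; o\bigl(\rho^{-\frac{\alpha-d+2}{2\alpha}}\bigr)$. -/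
/-!
For `‖y‖` large compared with `‖x‖ + 1` the truncations play no role: `hatv d α (x - y)` is
`‖x - y‖ ^ (-α)` and the weight is `exp (-ρ ‖y‖ ^ (-α))`. There `‖x - y‖ ^ (-α)` is replaced by its
second order Taylor polynomial in `x` (`quadApprox`), with an error
`O(‖x‖ ^ 3 ‖y‖ ^ (-(α + 3)))` (`quadApprox_far`). For `‖y‖ < K`, with `K ≥ 4 ‖x‖ + 4`, the true
integrand is at most `exp (-ρ K ^ (-α))`, while the polynomial itself is
`O(K ^ 3 ‖y‖ ^ (-(α + 3)))` (`quadApprox_near`), so it can be kept on the whole space. Hence one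
bound holds for all `y` (`pointwise_bound`).

The polynomial is integrated exactly (`integral_quadApprox`): the linear term is odd, the quadratic
form averages to `‖x‖ ^ 2 / d` times its trace (`integral_inner_sq`), and the substitution
`s = r ^ (-α)` turns the remaining radial integrals into Gamma integrals (`radial`). This gives
the two main terms.

Put `κ = (α - d + 2) / (4 α)` and `K = B ρ ^ κ`. The two errors are of order
`K ^ 3 ρ ^ (-(α + 3 - d) / α) ~ ρ ^ (-2 κ) ρ ^ (κ - 1 / α)` and
`K ^ d exp (-ρ K ^ (-α)) ~ ρ ^ (d κ) exp (-c ρ ^ (1 - α κ))`. Since `α < d + 2` gives `α κ < 1`,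
both are `o(ρ ^ (-2 κ))`, which is the claim.
-/

open MeasureTheory Real Filter
open scoped Classical

/-! ### Taylor expansion of a real power -/

/-- One integration of a power bound: `g 0 = 0` and `|g'| ≤ B |t| ^ n` near `0` give
`|g| ≤ B |t| ^ (n + 1)`. Iterating it yields a two-sided Taylor estimate. -/
lemma abs_le_of_deriv_bound_s7 (g g' : ℝ → ℝ) (c B : ℝ) (n : ℕ) (hB : 0 ≤ B) (h0 : g 0 = 0)
    (hd : ∀ t, |t| ≤ c → HasDerivAt g (g' t) t) (hb : ∀ t, |t| ≤ c → |g' t| ≤ B * |t| ^ n) :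
    ∀ t, |t| ≤ c → |g t| ≤ B * |t| ^ (n + 1) := by
  intro t ht
  have key := Convex.norm_image_sub_le_of_norm_hasDerivWithin_le (f := g) (f' := g')
    (s := Set.Icc (-|t|) |t|) (x := 0) (y := t) (C := B * |t| ^ n)
    (fun s hs => (hd s ((abs_le.2 hs).trans ht)).hasDerivWithinAt)
    (fun s hs => (hb s ((abs_le.2 hs).trans ht)).trans
      (mul_le_mul_of_nonneg_left (pow_le_pow_left₀ (abs_nonneg _) (abs_le.2 hs) n) hB))
    (convex_Icc _ _) (by simp) ⟨neg_abs_le t, le_abs_self t⟩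
  simpa [h0, pow_succ, mul_assoc] using key

lemma taylor_rpow (a : ℝ) (ha : 0 < a) : ∃ C : ℝ, 0 ≤ C ∧ ∀ h : ℝ, |h| ≤ 9 / 16 →
    |(1 + h) ^ (-a) - (1 - a * h + a * (a + 1) / 2 * h ^ 2)| ≤ C * |h| ^ 3 := by
  have hder : ∀ b t : ℝ, |t| ≤ 9 / 16 →
      HasDerivAt (fun t => (1 + t) ^ b) (b * (1 + t) ^ (b - 1)) t := by
    intro b t ht
    have hpos : 1 + t ≠ 0 := by have := (abs_le.1 ht).1; linarith
    have := ((hasDerivAt_id t).const_add 1).rpow_const (p := b) (Or.inl hpos)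
    simpa using this
  set B := a * (a + 1) * (a + 2) * (7 / 16 : ℝ) ^ (-a - 3) with hBdef
  have hB : 0 ≤ B := by positivity
  -- The second derivative of the remainder is estimated first, then the first, then the remainder.
  have h2 := abs_le_of_deriv_bound_s7 (fun t => a * (a + 1) * (1 + t) ^ (-a - 2) - a * (a + 1))
    (fun t => a * (a + 1) * ((-a - 2) * (1 + t) ^ (-a - 2 - 1))) (9 / 16) B 0 hB (by simp)
    (fun t ht => ((hder _ t ht).const_mul _).sub_const _) (by
      intro t ht
      have h1 : 7 / 16 ≤ 1 + t := by have := (abs_le.1 ht).1; linarith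
      have h3 : (1 + t) ^ (-a - 3) ≤ (7 / 16 : ℝ) ^ (-a - 3) :=
        rpow_le_rpow_of_nonpos (by norm_num) h1 (by linarith)
      have h4 : 0 ≤ (1 + t) ^ (-a - 3) := rpow_nonneg (by linarith) _
      rw [show a * (a + 1) * ((-a - 2) * (1 + t) ^ (-a - 2 - 1))
        = -(a * (a + 1) * (a + 2) * (1 + t) ^ (-a - 3)) by
          rw [show -a - 2 - 1 = -a - 3 by ring]; ring, abs_neg, abs_of_nonneg (by positivity)]
      simp only [pow_zero, mul_one]
      exact mul_le_mul_of_nonneg_left h3 (by positivity))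
  have h1 := abs_le_of_deriv_bound_s7 (fun t => -a * (1 + t) ^ (-a - 1) - (-a + a * (a + 1) * t))
    _ (9 / 16) B 1 hB (by simp)
    (fun t ht => (((hder (-a - 1) t ht).const_mul (-a)).sub
      (((hasDerivAt_id t).const_mul (a * (a + 1))).const_add (-a)))) (by
      intro t ht
      convert h2 t ht using 2
      simp only [show -a - 1 - 1 = -a - 2 by ring]
      ring)
  have h0 := abs_le_of_deriv_bound_s7
    (fun t => (1 + t) ^ (-a) - (1 - a * t + a * (a + 1) / 2 * t ^ 2))
    _ (9 / 16) B 2 hB (by simp)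
    (fun t ht => ((hder (-a) t ht).sub
      ((((hasDerivAt_id t).const_mul a).const_sub 1).add
        (((hasDerivAt_id t).pow 2).const_mul (a * (a + 1) / 2))))) (by
      intro t ht
      convert h1 t ht using 2
      simp only [id, Nat.cast_ofNat]
      ring)
  exact ⟨B, hB, h0⟩

/-- Expansion of `(‖x - y‖ / ‖y‖) ^ (-α)`, where `r = ‖x‖ / ‖y‖` and `s = ⟪y, x⟫ / ‖y‖ ^ 2`. -/
lemma expansion_bound (α : ℝ) (hα : 0 < α) : ∃ C : ℝ, 0 ≤ C ∧ ∀ r s : ℝ, 0 ≤ r → r ≤ 1 / 4 →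
    |s| ≤ r → |(1 + (r ^ 2 - 2 * s)) ^ (-(α / 2)) -
      (1 + α * s - α / 2 * r ^ 2 + α * (α + 2) / 2 * s ^ 2)| ≤ C * r ^ 3 := by
  obtain ⟨C, hC, h⟩ := taylor_rpow (α / 2) (by positivity)
  refine ⟨27 * C + 5 * (α * (α + 2) / 8), by positivity, fun r s hr hr4 hs => ?_⟩
  have hh : |r ^ 2 - 2 * s| ≤ 9 / 4 * r := by
    rw [abs_le] at *
    constructor <;> nlinarith
  have h1 := h (r ^ 2 - 2 * s) (by linarith)
  have h3 : |r ^ 2 - 2 * s| ^ 3 ≤ 27 * r ^ 3 := by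
    calc _ ≤ (9 / 4 * r) ^ 3 := pow_le_pow_left₀ (abs_nonneg _) hh 3
      _ ≤ _ := by nlinarith [pow_nonneg hr 3]
  have h4 : |r ^ 4 - 4 * s * r ^ 2| ≤ 5 * r ^ 3 := by
    have hr2 := sq_nonneg r
    have e1 : r ^ 4 ≤ r ^ 3 := by nlinarith [pow_nonneg hr 3]
    have e2 : |s * r ^ 2| ≤ r ^ 3 := by
      rw [abs_mul, abs_of_nonneg hr2]; nlinarith
    have e3 := abs_le.1 e2
    have e4 := pow_nonneg hr 4
    rw [abs_le]; constructor <;> linarith [e3.1, e3.2]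
  have e : (1 + (r ^ 2 - 2 * s)) ^ (-(α / 2)) -
      (1 + α * s - α / 2 * r ^ 2 + α * (α + 2) / 2 * s ^ 2) =
      ((1 + (r ^ 2 - 2 * s)) ^ (-(α / 2)) - (1 - α / 2 * (r ^ 2 - 2 * s) +
        α / 2 * (α / 2 + 1) / 2 * (r ^ 2 - 2 * s) ^ 2)) +
        α * (α + 2) / 8 * (r ^ 4 - 4 * s * r ^ 2) := by ring
  rw [e]
  refine (abs_add_le _ _).trans ?_
  rw [abs_mul (α * (α + 2) / 8), abs_of_nonneg (show 0 ≤ α * (α + 2) / 8 by positivity)]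
  have := mul_le_mul_of_nonneg_left h3 hC
  have := mul_le_mul_of_nonneg_left h4 (show 0 ≤ α * (α + 2) / 8 by positivity)
  nlinarith

/-! ### Exact integrals -/

lemma radial (d : ℕ) (hd : 1 ≤ d) (α ρ p : ℝ) (hα : 0 < α) (hρ : 0 < ρ) (hp : (d : ℝ) < p) :
    Integrable (fun y : EuclideanSpace ℝ (Fin d) => ‖y‖ ^ (-p) * exp (-(ρ * ‖y‖ ^ (-α)))) ∧
    ∫ y : EuclideanSpace ℝ (Fin d), ‖y‖ ^ (-p) * exp (-(ρ * ‖y‖ ^ (-α))) =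
      sigmad d / α *
        Gamma ((p - d) / α) * ρ ^ (-(p - d) / α) := by
  have : Nonempty (Fin d) := ⟨⟨0, hd⟩⟩
  have hq : 0 < (p - d) / α := div_pos (by linarith) hα
  -- The polar integrand is the pullback of the Gamma density `g` under `s = y ^ (-α)`.
  set g : ℝ → ℝ := fun s => 1 / α * (s ^ ((p - d) / α - 1) * exp (-(ρ * s))) with hg
  have hcongr : Set.EqOn
      (fun y : ℝ => (|(-α)| * y ^ (-α - 1)) • g (y ^ (-α)))
      (fun y : ℝ => y ^ (Module.finrank ℝ (EuclideanSpace ℝ (Fin d)) - 1) •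
        (y ^ (-p) * exp (-(ρ * y ^ (-α))))) (Set.Ioi 0) := by
    intro y hy
    have hy : 0 < y := hy
    simp only [hg, finrank_euclideanSpace_fin, smul_eq_mul, abs_neg, abs_of_pos hα]
    rw [← rpow_natCast, ← mul_assoc (y ^ (_ : ℝ)), ← rpow_add hy, ← rpow_mul hy.le, Nat.cast_sub hd,
      Nat.cast_one]
    have : y ^ (((d : ℝ) - 1) + -p) = y ^ (-α - 1) * y ^ (-α * ((p - d) / α - 1)) := by
      rw [← rpow_add hy]; congr 1; field_simp; ring
    rw [this]; field_simp
  have hne : -α ≠ 0 := by linarith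
  have hgi : IntegrableOn g (Set.Ioi 0) := by
    have := integrableOn_rpow_mul_exp_neg_mul_rpow (p := 1) (s := (p - d) / α - 1) (b := ρ)
      (by linarith) one_pos hρ
    simp only [rpow_one, neg_mul] at this
    exact this.const_mul _
  constructor
  · rw [integrable_fun_norm_addHaar volume (f := fun r : ℝ => r ^ (-p) * exp (-(ρ * r ^ (-α))))]
    exact ((integrableOn_Ioi_comp_rpow_iff g hne).2 hgi).congr_fun hcongr measurableSet_Ioi
  · rw [integral_fun_norm_addHaar volume (fun r : ℝ => r ^ (-p) * exp (-(ρ * r ^ (-α)))),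
      ← setIntegral_congr_fun measurableSet_Ioi hcongr, integral_comp_rpow_Ioi g hne, hg,
      integral_const_mul, integral_rpow_mul_exp_neg_mul_Ioi hq hρ, finrank_euclideanSpace_fin,
      measureReal_def, nsmul_eq_mul, smul_eq_mul, one_div ρ, inv_rpow hρ.le, ← rpow_neg hρ.le,
      neg_div, sigmad]
    ring

/-- The second moments of a radial density are isotropic: by reflection invariance the integral
depends on `x` only through `‖x‖`, and summing over an orthonormal basis gives the constant. -/
lemma integral_inner_sq (d : ℕ) (hd : 1 ≤ d) (f : ℝ → ℝ)
    (x : EuclideanSpace ℝ (Fin d))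
    (hint : ∀ v : EuclideanSpace ℝ (Fin d), Integrable
      (fun y : EuclideanSpace ℝ (Fin d) => inner ℝ y v ^ 2 * f ‖y‖)) :
    ∫ y : EuclideanSpace ℝ (Fin d), inner ℝ y x ^ 2 * f ‖y‖ =
      ‖x‖ ^ 2 / d * ∫ y : EuclideanSpace ℝ (Fin d), ‖y‖ ^ 2 * f ‖y‖ := by
  have hrot : ∀ v w : EuclideanSpace ℝ (Fin d), ‖v‖ = ‖w‖ →
      ∫ y : EuclideanSpace ℝ (Fin d), inner ℝ y v ^ 2 * f ‖y‖ =
        ∫ y : EuclideanSpace ℝ (Fin d), inner ℝ y w ^ 2 * f ‖y‖ := by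
    intro v w hvw
    set R := (Submodule.span ℝ {v - w})ᗮ.reflection with hR
    have hRv : R v = w := Submodule.reflection_sub hvw
    have := R.measurePreserving.integral_comp R.toMeasurableEquiv.measurableEmbedding
      (fun y => inner ℝ y w ^ 2 * f ‖y‖)
    rw [← this, ← hRv]
    simp only [LinearIsometryEquiv.inner_map_map, LinearIsometryEquiv.norm_map]
  have hi : ∀ i : Fin d, ∫ y : EuclideanSpace ℝ (Fin d), inner ℝ y x ^ 2 * f ‖y‖ =
      ‖x‖ ^ 2 * ∫ y : EuclideanSpace ℝ (Fin d),
        inner ℝ y (EuclideanSpace.single i (1 : ℝ)) ^ 2 * f ‖y‖ := by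
    intro i
    rw [hrot x (‖x‖ • EuclideanSpace.single i (1 : ℝ)) (by simp [norm_smul]), ← integral_const_mul]
    congr 1; ext y
    rw [inner_smul_right]; ring
  have hsum : (d : ℝ) * ∫ y : EuclideanSpace ℝ (Fin d), inner ℝ y x ^ 2 * f ‖y‖ =
      ‖x‖ ^ 2 * ∫ y : EuclideanSpace ℝ (Fin d), ‖y‖ ^ 2 * f ‖y‖ := by
    calc _ = ∑ i : Fin d, ∫ y : EuclideanSpace ℝ (Fin d), inner ℝ y x ^ 2 * f ‖y‖ := by simp
      _ = ∑ i : Fin d, ‖x‖ ^ 2 * ∫ y : EuclideanSpace ℝ (Fin d),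
        inner ℝ y (EuclideanSpace.single i (1 : ℝ)) ^ 2 * f ‖y‖ :=
          Finset.sum_congr rfl fun i _ => hi i
      _ = _ := by
        rw [← Finset.mul_sum, ← integral_finsetSum _ fun i _ => hint _]
        congr 2; ext y
        rw [← Finset.sum_mul, EuclideanSpace.norm_sq_eq]
        congr 1
        refine Finset.sum_congr rfl fun i _ => ?_
        rw [EuclideanSpace.inner_single_right]
        simp
  have : (d : ℝ) ≠ 0 := by positivity
  field_simp
  linarith

/-! ### Comparison with the quadratic approximation -/

/-- Second order Taylor polynomial in `x`, at `x = 0`, of `‖x - y‖ ^ (-α)`. Its value at `y = 0`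
is `0`, since `0 ^ (-α) = 0` for `α ≠ 0`. -/
noncomputable def quadApprox (d : ℕ) (α : ℝ) (x y : EuclideanSpace ℝ (Fin d)) : ℝ :=
  ‖y‖ ^ (-α) * (1 + α * (inner ℝ y x / ‖y‖ ^ 2) - α / 2 * (‖x‖ / ‖y‖) ^ 2 +
    α * (α + 2) / 2 * (inner ℝ y x / ‖y‖ ^ 2) ^ 2)

lemma hatv_of_one_le (d : ℕ) (α : ℝ) (hα : 0 < α) (y : EuclideanSpace ℝ (Fin d))
    (hy : 1 ≤ ‖y‖) : hatv d α y = ‖y‖ ^ (-α) := by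
  have h0 : y ≠ 0 := norm_pos_iff.1 (by linarith)
  rw [hatv, if_neg h0, min_eq_left (rpow_le_one_of_one_le_of_nonpos hy (by linarith))]

lemma rpow_le_hatv (d : ℕ) (α K : ℝ) (hα : 0 < α) (hK : 1 ≤ K) (y : EuclideanSpace ℝ (Fin d))
    (hy : ‖y‖ ≤ K) : K ^ (-α) ≤ hatv d α y := by
  have h1 : K ^ (-α) ≤ 1 := rpow_le_one_of_one_le_of_nonpos hK (by linarith)
  unfold hatv; split_ifs with h0
  · exact h1
  · exact le_min (rpow_le_rpow_of_nonpos (norm_pos_iff.2 h0) hy (by linarith)) h1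

/-- In the range `‖y‖ ≤ K` the polynomial need not be close to `‖x - y‖ ^ (-α)`, but its own size is
already within the error term. -/
lemma quadApprox_near (d : ℕ) (α K : ℝ) (hα : 0 < α) (x y : EuclideanSpace ℝ (Fin d))
    (hxK : ‖x‖ ≤ K) (hyK : ‖y‖ ≤ K) :
    |quadApprox d α x y| ≤
      (1 + α + α / 2 + α * (α + 2) / 2) * K ^ 3 * ‖y‖ ^ (-(α + 3)) := by
  rcases eq_or_ne y 0 with rfl | h0
  · have h1 : -α ≠ 0 := by linarith
    have h2 : -3 + -α ≠ 0 := by linarith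
    simp [quadApprox, zero_rpow h1, zero_rpow h2]
  have hy : 0 < ‖y‖ := norm_pos_iff.2 h0
  have e : ‖y‖ ^ (-(α + 3)) = ‖y‖ ^ (-α) / ‖y‖ ^ 3 := by
    rw [← rpow_natCast, ← rpow_sub hy]; congr 1; push_cast; ring
  set k := K / ‖y‖ with hk
  have hk1 : 1 ≤ k := (one_le_div hy).2 hyK
  have hr : ‖x‖ / ‖y‖ ≤ k := div_le_div_of_nonneg_right hxK hy.le
  have hr0 : 0 ≤ ‖x‖ / ‖y‖ := by positivity
  have hs : |inner ℝ y x / ‖y‖ ^ 2| ≤ ‖x‖ / ‖y‖ := by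
    rw [abs_div, abs_of_pos (pow_pos hy 2), div_le_div_iff₀ (by positivity) hy]
    nlinarith [abs_real_inner_le_norm y x]
  have hs2 : (inner ℝ y x / ‖y‖ ^ 2) ^ 2 ≤ k ^ 2 := by
    rw [← sq_abs]; exact pow_le_pow_left₀ (abs_nonneg _) (hs.trans hr) 2
  have hr2 : (‖x‖ / ‖y‖) ^ 2 ≤ k ^ 2 := pow_le_pow_left₀ hr0 hr 2
  have hk2 : k ^ 2 ≤ k ^ 3 := pow_le_pow_right₀ hk1 (by norm_num)
  have hk3 : k ≤ k ^ 3 := by simpa using pow_le_pow_right₀ hk1 (show 1 ≤ 3 by norm_num)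
  have hk4 : 1 ≤ k ^ 3 := one_le_pow₀ hk1
  have hbr : |1 + α * (inner ℝ y x / ‖y‖ ^ 2) - α / 2 * (‖x‖ / ‖y‖) ^ 2 +
      α * (α + 2) / 2 * (inner ℝ y x / ‖y‖ ^ 2) ^ 2| ≤
      (1 + α + α / 2 + α * (α + 2) / 2) * k ^ 3 := by
    have h1 := abs_le.1 (hs.trans (hr.trans hk3))
    have a1 := mul_le_mul_of_nonneg_left h1.1 hα.le
    have a2 := mul_le_mul_of_nonneg_left h1.2 hα.le
    have a3 := mul_le_mul_of_nonneg_left (hr2.trans hk2) (show 0 ≤ α / 2 by positivity)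
    have a4 := mul_le_mul_of_nonneg_left (hs2.trans hk2) (show 0 ≤ α * (α + 2) / 2 by positivity)
    have b3 : 0 ≤ α / 2 * (‖x‖ / ‖y‖) ^ 2 := by positivity
    have b4 : 0 ≤ α * (α + 2) / 2 * (inner ℝ y x / ‖y‖ ^ 2) ^ 2 := by positivity
    have b5 : 0 ≤ α * (α + 2) / 2 * k ^ 3 := by positivity
    have b6 : 0 ≤ α / 2 * k ^ 3 := by positivity
    rw [abs_le]; constructor <;> linarith
  rw [quadApprox, abs_mul, abs_of_nonneg (show 0 ≤ ‖y‖ ^ (-α) by positivity)]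
  refine (mul_le_mul_of_nonneg_left hbr (by positivity)).trans (le_of_eq ?_)
  rw [e, hk, div_pow]; ring

/-- Taylor remainder in the range `‖y‖ ≥ 4 ‖x‖`, with a constant depending on `α` only. -/
lemma quadApprox_far (α : ℝ) (hα : 0 < α) : ∃ C : ℝ, 0 ≤ C ∧ ∀ (d : ℕ)
    (x y : EuclideanSpace ℝ (Fin d)), y ≠ 0 → 4 * ‖x‖ ≤ ‖y‖ →
    |‖x - y‖ ^ (-α) - quadApprox d α x y| ≤ C * ‖x‖ ^ 3 * ‖y‖ ^ (-(α + 3)) := by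
  obtain ⟨C, hC, h⟩ := expansion_bound α hα
  refine ⟨C, hC, fun d x y h0 hxy => ?_⟩
  have hy : 0 < ‖y‖ := norm_pos_iff.2 h0
  have e : ‖y‖ ^ (-(α + 3)) = ‖y‖ ^ (-α) / ‖y‖ ^ 3 := by
    rw [← rpow_natCast, ← rpow_sub hy]; congr 1; push_cast; ring
  have hs : |inner ℝ y x / ‖y‖ ^ 2| ≤ ‖x‖ / ‖y‖ := by
    rw [abs_div, abs_of_pos (pow_pos hy 2), div_le_div_iff₀ (by positivity) hy]
    nlinarith [abs_real_inner_le_norm y x]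
  have h1 := h (‖x‖ / ‖y‖) (inner ℝ y x / ‖y‖ ^ 2) (by positivity)
    (by rw [div_le_div_iff₀ hy (by norm_num)]; linarith) hs
  have hsq : ‖x - y‖ ^ 2 =
      ‖y‖ ^ 2 * (1 + ((‖x‖ / ‖y‖) ^ 2 - 2 * (inner ℝ y x / ‖y‖ ^ 2))) := by
    rw [norm_sub_sq_real, real_inner_comm]; field_simp; ring
  have hpos : 0 ≤ 1 + ((‖x‖ / ‖y‖) ^ 2 - 2 * (inner ℝ y x / ‖y‖ ^ 2)) := by
    by_contra hneg
    push Not at hneg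
    nlinarith [sq_nonneg ‖x - y‖, pow_pos hy 2]
  have hpow : ∀ t : ℝ, 0 ≤ t → t ^ (-α) = (t ^ 2) ^ (-(α / 2)) := by
    intro t ht
    rw [← rpow_natCast, ← rpow_mul ht]; congr 1; push_cast; ring
  rw [hpow _ (norm_nonneg _), hsq, mul_rpow (by positivity) hpos, ← hpow _ hy.le, quadApprox,
    ← mul_sub, abs_mul, abs_of_nonneg (show 0 ≤ ‖y‖ ^ (-α) by positivity)]
  refine (mul_le_mul_of_nonneg_left h1 (by positivity)).trans (le_of_eq ?_)
  rw [e, div_pow]; ring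

/-- The condition `4 * ‖x‖ + 4 ≤ K` ensures that `‖y‖ ≥ K` implies `‖y‖ ≥ 1`, `‖x - y‖ ≥ 1` and
`‖y‖ ≥ 4 ‖x‖`, so that outside the ball no truncation is active and `quadApprox_far` applies. -/
lemma pointwise_bound (α : ℝ) (hα : 0 < α) : ∃ C : ℝ, 0 ≤ C ∧ ∀ (d : ℕ) (ρ K : ℝ)
    (x y : EuclideanSpace ℝ (Fin d)), 0 < ρ → 4 * ‖x‖ + 4 ≤ K →
    |hatv d α (x - y) * exp (-(ρ * hatv d α y)) -
        quadApprox d α x y * exp (-(ρ * ‖y‖ ^ (-α)))| ≤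
      C * K ^ 3 * (‖y‖ ^ (-(α + 3)) * exp (-(ρ * ‖y‖ ^ (-α)))) +
        (Metric.ball (0 : EuclideanSpace ℝ (Fin d)) K).indicator
          (fun _ => exp (-(ρ * K ^ (-α)))) y := by
  obtain ⟨C, hC, hfar⟩ := quadApprox_far α hα
  refine ⟨C + (1 + α + α / 2 + α * (α + 2) / 2), by positivity, fun d ρ K x y hρ hK => ?_⟩
  have hx := norm_nonneg x
  have hK3 : ‖x‖ ^ 3 ≤ K ^ 3 := pow_le_pow_left₀ hx (by linarith) 3
  have hK0 : 0 ≤ K ^ 3 := le_trans (by positivity) hK3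
  set E := exp (-(ρ * ‖y‖ ^ (-α))) with hE
  have hE0 : 0 < E := exp_pos _
  have hN : 0 ≤ ‖y‖ ^ (-(α + 3)) := by positivity
  have hNE : 0 ≤ ‖y‖ ^ (-(α + 3)) * E := by positivity
  by_cases hy : ‖y‖ < K
  · rw [Set.indicator_of_mem (by simpa using hy)]
    have h1 : |hatv d α (x - y) * exp (-(ρ * hatv d α y))| ≤ exp (-(ρ * K ^ (-α))) := by
      rw [abs_of_nonneg (mul_nonneg (hatv_nonneg _ _ _) (exp_pos _).le)]
      calc _ ≤ 1 * exp (-(ρ * hatv d α y)) :=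
            mul_le_mul_of_nonneg_right (hatv_le_one _ _ _) (exp_pos _).le
        _ ≤ _ := by
          rw [one_mul, exp_le_exp, neg_le_neg_iff]
          exact mul_le_mul_of_nonneg_left
            (rpow_le_hatv d α K hα (by linarith) y hy.le) hρ.le
    have h2 : |quadApprox d α x y * E| ≤
        (1 + α + α / 2 + α * (α + 2) / 2) * K ^ 3 * (‖y‖ ^ (-(α + 3)) * E) := by
      rw [abs_mul, abs_of_pos hE0, ← mul_assoc]
      exact mul_le_mul_of_nonneg_right
        (quadApprox_near d α K hα x y (by linarith) hy.le) hE0.le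
    have h3 : 0 ≤ C * K ^ 3 * (‖y‖ ^ (-(α + 3)) * E) := by positivity
    refine (abs_sub _ _).trans ?_
    linarith
  · push Not at hy
    rw [Set.indicator_of_notMem (by simpa using hy), add_zero]
    have hxy : 1 ≤ ‖x - y‖ := by
      have := norm_sub_norm_le y x
      rw [norm_sub_rev] at this
      linarith
    rw [hatv_of_one_le d α hα _ hxy, hatv_of_one_le d α hα y (by linarith), ← sub_mul, abs_mul,
      abs_of_pos hE0, ← mul_assoc]
    refine mul_le_mul_of_nonneg_right ((hfar d x y (norm_pos_iff.1 (by linarith))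
      (by linarith)).trans (mul_le_mul_of_nonneg_right ?_ hN)) hE0.le
    have : 0 ≤ (1 + α + α / 2 + α * (α + 2) / 2) * K ^ 3 := by positivity
    nlinarith [mul_le_mul_of_nonneg_left hK3 hC]

/-- The weighted integral of `quadApprox` is exactly the sum of the two main terms. -/
lemma integral_quadApprox (d : ℕ) (hd : 1 ≤ d) (α ρ : ℝ) (hα : (d : ℝ) < α) (hρ : 0 < ρ)
    (x : EuclideanSpace ℝ (Fin d)) :
    Integrable (fun y : EuclideanSpace ℝ (Fin d) =>
      quadApprox d α x y * exp (-(ρ * ‖y‖ ^ (-α)))) ∧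
    ∫ y : EuclideanSpace ℝ (Fin d), quadApprox d α x y * exp (-(ρ * ‖y‖ ^ (-α))) =
      sigmad d / α * Gamma ((α - d) / α) * ρ ^ (-(α - d) / α) +
      α * sigmad d / (2 * d) * Gamma ((2 * α - d + 2) / α) * ρ ^ (-(α - d + 2) / α) *
        ‖x‖ ^ 2 := by
  have hd0 : (0 : ℝ) < d := by exact_mod_cast hd
  have hα0 : 0 < α := hd0.trans hα
  obtain ⟨i0, v0⟩ := radial d hd α ρ α hα0 hρ hα
  obtain ⟨i1, -⟩ := radial d hd α ρ (α + 1) hα0 hρ (by linarith)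
  obtain ⟨i2, v2⟩ := radial d hd α ρ (α + 2) hα0 hρ (by linarith)
  set f : ℝ → ℝ → ℝ := fun p r => r ^ (-p) * exp (-(ρ * r ^ (-α))) with hf
  have hf0 : ∀ p r, 0 ≤ r → 0 ≤ f p r := fun p r hr => by positivity
  have hmeas : ∀ p, Measurable (fun y : EuclideanSpace ℝ (Fin d) => f p ‖y‖) := fun p => by
    simp only [hf]; fun_prop
  have hshift : ∀ (p : ℝ) (n : ℕ) (r : ℝ), 0 < p → 0 ≤ r → r ^ n * f (p + n) r = f p r := by
    intro p n r hp hr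
    rcases hr.eq_or_lt with rfl | hr
    · have hn : (0 : ℝ) ≤ n := by positivity
      have a1 : -p ≠ 0 := by linarith
      have a2 : -(p + n) ≠ 0 := by linarith
      simp only [hf]
      rw [zero_rpow a1, zero_rpow a2]
      simp
    · simp only [hf]
      rw [← mul_assoc, ← rpow_natCast, ← rpow_add hr]; congr 2; ring
  have iA : Integrable (fun y : EuclideanSpace ℝ (Fin d) => inner ℝ y x * f (α + 2) ‖y‖) := by
    refine (i1.const_mul ‖x‖).mono' ?_ (ae_of_all _ fun y => ?_)
    · exact ((measurable_id.inner_const).mul (hmeas _)).aestronglyMeasurable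
    · have := hshift (α + 1) 1 ‖y‖ (by linarith) (norm_nonneg _)
      rw [show α + 1 + (1 : ℕ) = α + 2 by push_cast; ring, pow_one] at this
      change _ ≤ ‖x‖ * f (α + 1) ‖y‖
      rw [← this, norm_mul, norm_of_nonneg (hf0 _ _ (norm_nonneg y)), ← mul_assoc ‖x‖]
      refine mul_le_mul_of_nonneg_right ?_ (hf0 _ _ (norm_nonneg y))
      rw [mul_comm]
      exact abs_real_inner_le_norm y x
  have h42 : ∀ y : EuclideanSpace ℝ (Fin d), ‖y‖ ^ 2 * f (α + 4) ‖y‖ = f (α + 2) ‖y‖ := by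
    intro y
    have := hshift (α + 2) 2 ‖y‖ (by linarith) (norm_nonneg _)
    rwa [show α + 2 + (2 : ℕ) = α + 4 by push_cast; ring] at this
  have iB : ∀ v : EuclideanSpace ℝ (Fin d),
      Integrable (fun y : EuclideanSpace ℝ (Fin d) => inner ℝ y v ^ 2 * f (α + 4) ‖y‖) := by
    intro v
    refine (i2.const_mul (‖v‖ ^ 2)).mono' ?_ (ae_of_all _ fun y => ?_)
    · exact (((measurable_id.inner_const).pow_const 2).mul (hmeas _)).aestronglyMeasurable
    · change _ ≤ ‖v‖ ^ 2 * f (α + 2) ‖y‖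
      rw [← h42, norm_mul, norm_of_nonneg (hf0 _ _ (norm_nonneg y)), ← mul_assoc (‖v‖ ^ 2)]
      refine mul_le_mul_of_nonneg_right ?_ (hf0 _ _ (norm_nonneg y))
      rw [mul_comm, ← mul_pow, norm_pow]
      exact pow_le_pow_left₀ (norm_nonneg _) (abs_real_inner_le_norm y v) 2
  have vA : ∫ y : EuclideanSpace ℝ (Fin d), inner ℝ y x * f (α + 2) ‖y‖ = 0 := by
    have := integral_neg_eq_self
      (fun y : EuclideanSpace ℝ (Fin d) => inner ℝ y x * f (α + 2) ‖y‖) volume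
    simp only [inner_neg_left, norm_neg, neg_mul, integral_neg] at this
    linarith
  have vB := integral_inner_sq d hd (f (α + 4)) x iB
  simp only [h42] at vB
  have hdecomp : (fun y : EuclideanSpace ℝ (Fin d) =>
      quadApprox d α x y * exp (-(ρ * ‖y‖ ^ (-α)))) =
      fun y => f α ‖y‖ + α * (inner ℝ y x * f (α + 2) ‖y‖) -
        α / 2 * ‖x‖ ^ 2 * f (α + 2) ‖y‖ +
        α * (α + 2) / 2 * (inner ℝ y x ^ 2 * f (α + 4) ‖y‖) := by
    ext y
    have e2 := hshift α 2 ‖y‖ hα0 (norm_nonneg _)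
    have e4 := hshift α 4 ‖y‖ hα0 (norm_nonneg _)
    push_cast at e2 e4
    rcases eq_or_ne y 0 with rfl | h0
    · have a1 : -α ≠ 0 := by linarith
      have a2 : -2 + -α ≠ 0 := by linarith
      simp [quadApprox, hf, zero_rpow a1, zero_rpow a2]
    have hy : ‖y‖ ≠ 0 := norm_ne_zero_iff.2 h0
    have e2' : f (α + 2) ‖y‖ = f α ‖y‖ / ‖y‖ ^ 2 := by rw [← e2]; field_simp
    have e4' : f (α + 4) ‖y‖ = f α ‖y‖ / ‖y‖ ^ 4 := by rw [← e4]; field_simp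
    rw [e2', e4']
    simp only [hf, quadApprox]
    field_simp
  have i0' : Integrable (fun y : EuclideanSpace ℝ (Fin d) => f α ‖y‖) := i0
  have i2' : Integrable (fun y : EuclideanSpace ℝ (Fin d) => f (α + 2) ‖y‖) := i2
  have j1 := i0'.add (iA.const_mul α)
  have j2 := j1.sub (i2'.const_mul (α / 2 * ‖x‖ ^ 2))
  have j3 := j2.add ((iB x).const_mul (α * (α + 2) / 2))
  rw [hdecomp]
  refine ⟨j3, ?_⟩
  have q1 := integral_add j2 ((iB x).const_mul (α * (α + 2) / 2))
  have q2 := integral_sub j1 (i2'.const_mul (α / 2 * ‖x‖ ^ 2))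
  have q3 := integral_add i0' (iA.const_mul α)
  simp only [Pi.add_apply, Pi.sub_apply] at q1 q2 q3
  -- The functional equation of `Gamma` absorbs the factor `α + 2 - d` from the Laplacian.
  have hG : Gamma ((2 * α - d + 2) / α) = (α + 2 - d) / α * Gamma ((α + 2 - d) / α) := by
    rw [← Gamma_add_one (div_pos (by linarith) hα0).ne']
    congr 1; field_simp; ring
  rw [q1, q2, q3, integral_const_mul, integral_const_mul, integral_const_mul, vA, vB, v0, v2, hG,
    show -(α + 2 - d) / α = -(α - d + 2) / α by ring]
  field_simp
  ring

/-! ### Asymptotics -/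

/-- Non-asymptotic form of the expansion, with a free cutoff radius `K`. -/
lemma error_bound (d : ℕ) (hd : 1 ≤ d) (α : ℝ) (hα : (d : ℝ) < α) :
    ∃ A : ℝ, ∀ (ρ K : ℝ) (x : EuclideanSpace ℝ (Fin d)), 0 < ρ → 4 * ‖x‖ + 4 ≤ K →
    |(∫ y : EuclideanSpace ℝ (Fin d), hatv d α (x - y) * exp (-(ρ * hatv d α y))) -
      (sigmad d / α * Gamma ((α - d) / α) * ρ ^ (-(α - d) / α) +
      α * sigmad d / (2 * d) * Gamma ((2 * α - d + 2) / α) * ρ ^ (-(α - d + 2) / α) *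
        ‖x‖ ^ 2)| ≤
      A * K ^ 3 * ρ ^ (-(α + 3 - d) / α) +
        (volume (Metric.ball (0 : EuclideanSpace ℝ (Fin d)) 1)).toReal * K ^ d *
          exp (-(ρ * K ^ (-α))) := by
  have hd0 : (0 : ℝ) < d := by exact_mod_cast hd
  have hα0 : 0 < α := hd0.trans hα
  obtain ⟨C, -, hpt⟩ := pointwise_bound α hα0
  refine ⟨C * (sigmad d / α * Gamma ((α + 3 - d) / α)), fun ρ K x hρ hK => ?_⟩
  have hK0 : 0 < K := by have := norm_nonneg x; linarith
  obtain ⟨iP, vP⟩ := integral_quadApprox d hd α ρ hα hρ x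
  obtain ⟨i3, v3⟩ := radial d hd α ρ (α + 3) hα0 hρ (by linarith)
  have hball : volume (Metric.ball (0 : EuclideanSpace ℝ (Fin d)) K) ≠ ⊤ :=
    measure_ball_lt_top.ne
  have iI : Integrable ((Metric.ball (0 : EuclideanSpace ℝ (Fin d)) K).indicator
      (fun _ => exp (-(ρ * K ^ (-α))))) :=
    (integrable_indicator_iff measurableSet_ball).2 (integrableOn_const hball)
  have iD := (i3.const_mul (C * K ^ 3)).add iI
  have hmeas : AEStronglyMeasurable (fun y : EuclideanSpace ℝ (Fin d) =>
      hatv d α (x - y) * exp (-(ρ * hatv d α y))) := by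
    have h1 := measurable_hatv d α
    have h2 : Measurable (fun y : EuclideanSpace ℝ (Fin d) => hatv d α (x - y)) :=
      h1.comp (measurable_const.sub measurable_id)
    exact (h2.mul (h1.const_mul ρ).neg.exp).aestronglyMeasurable
  have hle : ∀ᵐ y : EuclideanSpace ℝ (Fin d),
      ‖hatv d α (x - y) * exp (-(ρ * hatv d α y)) -
        quadApprox d α x y * exp (-(ρ * ‖y‖ ^ (-α)))‖ ≤
      C * K ^ 3 * (‖y‖ ^ (-(α + 3)) * exp (-(ρ * ‖y‖ ^ (-α)))) +
        (Metric.ball (0 : EuclideanSpace ℝ (Fin d)) K).indicator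
          (fun _ => exp (-(ρ * K ^ (-α)))) y :=
    ae_of_all _ fun y => hpt d ρ K x y hρ hK
  have iF : Integrable (fun y : EuclideanSpace ℝ (Fin d) =>
      hatv d α (x - y) * exp (-(ρ * hatv d α y))) := by
    have h := (iD.mono' (hmeas.sub iP.aestronglyMeasurable) hle).add iP
    refine h.congr (ae_of_all _ fun y => ?_)
    simp
  have hfin := norm_integral_le_of_norm_le iD hle
  rw [integral_sub iF iP, vP, integral_add' (i3.const_mul (C * K ^ 3)) iI, integral_const_mul, v3,
    integral_indicator measurableSet_ball, setIntegral_const, measureReal_def,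
    Measure.addHaar_ball_of_pos _ _ hK0, finrank_euclideanSpace_fin, ENNReal.toReal_mul,
    ENNReal.toReal_ofReal (by positivity), smul_eq_mul, norm_eq_abs] at hfin
  refine hfin.trans (le_of_eq ?_)
  ring

/-- Uniformly for `|x| ≤ M ρ^{(α-d+2)/(4α)}`, the tilted mean of the shifted potential equals
`(νσ_d/α)Γ((α-d)/α) ρ^{-(α-d)/α} + (ναs_d/2d)Γ((2α-d+2)/α) ρ^{-(α-d+2)/α}|x|²`
up to an error `o(ρ^{-(α-d+2)/(2α)})` as `ρ → ∞`. -/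
theorem stmt7 (d : ℕ) (hd : 1 ≤ d) (α ν M : ℝ) (hα₁ : (d : ℝ) < α) (hα₂ : α < d + 2)
    (hν : 0 < ν) (hM : 0 < M) :
    ∀ ε > 0, ∃ R : ℝ, ∀ ρ ≥ R, ∀ x : EuclideanSpace ℝ (Fin d),
      ‖x‖ ≤ M * ρ ^ ((α - d + 2) / (4 * α)) →
      |ν * (∫ y : EuclideanSpace ℝ (Fin d), hatv d α (x - y) * Real.exp (-(ρ * hatv d α y)))
          - ν * sigmad d / α * Real.Gamma ((α - d) / α) * ρ ^ (-(α - d) / α)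
          - (ν * α * sigmad d / (2 * d)) * Real.Gamma ((2 * α - d + 2) / α) *
              ρ ^ (-(α - d + 2) / α) * ‖x‖ ^ 2|
        ≤ ε * ρ ^ (-(α - d + 2) / (2 * α)) := by
  intro ε hε
  have hd0 : (0 : ℝ) < d := by exact_mod_cast hd
  have hα0 : 0 < α := hd0.trans hα₁
  obtain ⟨A, hA⟩ := error_bound d hd α hα₁
  set V := (volume (Metric.ball (0 : EuclideanSpace ℝ (Fin d)) 1)).toReal with hV
  set κ := (α - d + 2) / (4 * α) with hκ
  -- For `ρ ≥ 1` this choice makes `B * ρ ^ κ` at least `4 * ‖x‖ + 4`.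
  set B := 4 * (M + 1) with hB
  have hB0 : 0 < B := by positivity
  have hκ0 : 0 < κ := div_pos (by linarith) (by positivity)
  have hακ : α * κ < 1 := by
    rw [hκ, ← mul_div_assoc, div_lt_one (by positivity)]
    nlinarith
  have hκα : κ < 1 / α := by rw [lt_div_iff₀ hα0]; linarith
  have hδ : 0 < 1 - α * κ := by linarith
  have t1 : Tendsto (fun ρ : ℝ => ρ ^ (κ - 1 / α)) atTop (nhds 0) := by
    have := tendsto_rpow_neg_atTop (show 0 < 1 / α - κ by linarith)
    simpa using this
  have t2 : Tendsto (fun ρ : ℝ => ρ ^ ((d + 2) * κ) * exp (-(B ^ (-α) * ρ ^ (1 - α * κ))))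
      atTop (nhds 0) := by
    have h := (tendsto_rpow_mul_exp_neg_mul_atTop_nhds_zero ((d + 2) * κ / (1 - α * κ))
      (B ^ (-α)) (by positivity)).comp (tendsto_rpow_atTop hδ)
    refine h.congr' ?_
    filter_upwards [eventually_gt_atTop 0] with ρ hρ
    simp only [Function.comp]
    rw [← rpow_mul hρ.le, mul_div_cancel₀ _ hδ.ne', neg_mul]
  have t3 : Tendsto (fun ρ : ℝ => ν * (A * B ^ 3 * ρ ^ (κ - 1 / α) + V * B ^ d *
      (ρ ^ ((d + 2) * κ) * exp (-(B ^ (-α) * ρ ^ (1 - α * κ)))))) atTop (nhds 0) := by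
    have := ((t1.const_mul (A * B ^ 3)).add (t2.const_mul (V * B ^ d))).const_mul ν
    simpa using this
  obtain ⟨R, hR⟩ := eventually_atTop.1 (t3.eventually (gt_mem_nhds hε))
  refine ⟨max R 1, fun ρ hρ x hx => ?_⟩
  have hρ1 : 1 ≤ ρ := (le_max_right _ _).trans hρ
  have hρ0 : 0 < ρ := by linarith
  have hRρ := hR ρ ((le_max_left _ _).trans hρ)
  have hκ1 : 1 ≤ ρ ^ κ := one_le_rpow hρ1 hκ0.le
  have hbd := hA ρ (B * ρ ^ κ) x hρ0 (by rw [hB]; nlinarith)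
  have e1 : (ρ ^ κ) ^ 3 * ρ ^ (-(α + 3 - d) / α) = ρ ^ (κ - 1 / α) * ρ ^ (-(2 * κ)) := by
    rw [← rpow_natCast, ← rpow_mul hρ0.le, ← rpow_add hρ0, ← rpow_add hρ0]
    congr 1
    rw [hκ]; push_cast; field_simp; ring
  have e2 : (ρ ^ κ) ^ d = ρ ^ ((d + 2) * κ) * ρ ^ (-(2 * κ)) := by
    rw [← rpow_natCast, ← rpow_mul hρ0.le, ← rpow_add hρ0]
    congr 1; ring
  have e3 : ρ * (B * ρ ^ κ) ^ (-α) = B ^ (-α) * ρ ^ (1 - α * κ) := by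
    rw [mul_rpow hB0.le (by positivity), ← rpow_mul hρ0.le,
      show 1 - α * κ = 1 + κ * -α by ring, rpow_add hρ0, rpow_one]
    ring
  have e4 : ρ ^ (-(α - d + 2) / (2 * α)) = ρ ^ (-(2 * κ)) := by
    congr 1; rw [hκ]; field_simp; ring
  rw [e4]
  calc _ = |ν * ((∫ y : EuclideanSpace ℝ (Fin d),
          hatv d α (x - y) * exp (-(ρ * hatv d α y))) -
        (sigmad d / α * Gamma ((α - d) / α) * ρ ^ (-(α - d) / α) +
          α * sigmad d / (2 * d) * Gamma ((2 * α - d + 2) / α) * ρ ^ (-(α - d + 2) / α) *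
          ‖x‖ ^ 2))| := by congr 1; ring
    _ = ν * _ := by rw [abs_mul, abs_of_pos hν]
    _ ≤ ν * _ := mul_le_mul_of_nonneg_left hbd hν.le
    _ = ν * (A * B ^ 3 * ρ ^ (κ - 1 / α) + V * B ^ d *
      (ρ ^ ((d + 2) * κ) * exp (-(B ^ (-α) * ρ ^ (1 - α * κ))))) * ρ ^ (-(2 * κ)) := by
        rw [e3, mul_pow B _ 3, mul_pow B _ d]
        linear_combination ν * A * B ^ 3 * e1 +
          ν * V * B ^ d * exp (-(B ^ (-α) * ρ ^ (1 - α * κ))) * e2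
    _ ≤ _ := mul_le_mul_of_nonneg_right hRρ.le (by positivity)
end
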